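/- Let Λ̃₁ = U₁ᵀ B V₁, where U₁ and V₁ are the first columns of U and V. Then the statistic S_{1,Λ̃₁} = (∫_{d₁}^{∞} e^{−(z−Λ̃₁)²/(2σ²)} z^{N−p} ∏_{j=2}^{p} (z² − d_j²) dz) / (∫_{d₂}^{∞} e^{−(z−Λ̃₁)²/(2σ²)} z^{N−p} ∏_{j=2}^{p} (z² − d_j²) dz) is uniformly distributed on (0,1). -/

import Mathlib

open MeasureTheory ProbabilityTheory Matrix

namespace KR
open scoped ENNReal

lemma lintegral_fin_prod {n : ℕ} {X : Type*} [MeasurableSpace X] (μ : Fin n → Measure X)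
    [∀ i, SigmaFinite (μ i)] (f : Fin n → X → ℝ≥0∞) (hf : ∀ i, Measurable (f i)) :
    ∫⁻ x, ∏ i, f i (x i) ∂(Measure.pi μ) = ∏ i, ∫⁻ x, f i x ∂(μ i) := by
  induction n with
  | zero => simp
  | succ n ih =>
    rw [← ((measurePreserving_piFinSuccAbove μ 0).symm).lintegral_comp_emb
      (MeasurableEquiv.measurableEmbedding _)]
    simp_rw [MeasurableEquiv.piFinSuccAbove_symm_apply, Fin.insertNthEquiv,
      Fin.prod_univ_succ, Fin.insertNth_zero]
    simp only [Equiv.coe_fn_mk, Fin.cons_zero, Fin.cons_succ, Fin.zero_succAbove, cast_eq]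
    rw [← ih (fun i => μ i.succ) (fun i => f i.succ) (fun i => hf _)]
    refine lintegral_prod_mul (μ := μ 0) (ν := Measure.pi fun i : Fin n => μ i.succ)
      (hf 0).aemeasurable (g := fun y : Fin n → X => ∏ i, f i.succ (y i)) ?_
    exact (Finset.measurable_prod _ (fun i _ => (hf _).comp (measurable_pi_apply i))).aemeasurable

lemma pi_withDensity {n : ℕ} {X : Type*} [MeasureSpace X] [SigmaFinite (volume : Measure X)]
    (f : Fin n → X → ℝ≥0∞) (hf : ∀ i, Measurable (f i))
    [∀ i, SigmaFinite ((volume : Measure X).withDensity (f i))] :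
    Measure.pi (fun i => (volume : Measure X).withDensity (f i)) =
      (volume : Measure (Fin n → X)).withDensity (fun x => ∏ i, f i (x i)) := by
  refine Measure.pi_eq (fun s hs => ?_)
  rw [withDensity_apply _ (MeasurableSet.univ_pi hs), ← lintegral_indicator (MeasurableSet.univ_pi hs)]
  have : (Set.univ.pi s).indicator (fun x : Fin n → X => ∏ i, f i (x i)) =
      fun x => ∏ i, (s i).indicator (f i) (x i) := by
    ext x
    by_cases hx : x ∈ Set.univ.pi s
    · rw [Set.indicator_of_mem hx]
      exact Finset.prod_congr rfl (fun i _ => (Set.indicator_of_mem (hx i trivial) _).symm)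
    · rw [Set.indicator_of_notMem hx]
      simp only [Set.mem_pi, Set.mem_univ, true_imp_iff, not_forall] at hx
      obtain ⟨i, hi⟩ := hx
      exact (Finset.prod_eq_zero (Finset.mem_univ i) (Set.indicator_of_notMem hi _)).symm
  rw [this, volume_pi, lintegral_fin_prod _ _ (fun i => (hf i).indicator (hs i))]
  refine Finset.prod_congr rfl (fun i _ => ?_)
  rw [withDensity_apply _ (hs i), lintegral_indicator (hs i)]

/-- Law of the Gaussian matrix has a density. -/
lemma gaussian_density (N p : ℕ) (σ : ℝ) (hσ : 0 < σ) (v : NNReal) (hvσ : (v : ℝ) = σ ^ 2) (B : Fin N → Fin p → ℝ) :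
    ∃ C : ℝ, 0 ≤ C ∧ Measure.pi (fun i : Fin N => Measure.pi (fun j : Fin p =>
        gaussianReal (B i j) v)) =
      (volume : Measure (Fin N → Fin p → ℝ)).withDensity (fun Y => ENNReal.ofReal
        (C * Real.exp (- (∑ i, ∑ j, (Y i j - B i j) ^ 2) / (2 * σ ^ 2)))) := by
  have hv : v ≠ 0 := by
    rintro rfl
    simp only [NNReal.coe_zero] at hvσ
    exact (pow_pos hσ 2).ne hvσ
  have h1 : ∀ i, Measure.pi (fun j : Fin p =>
        gaussianReal (B i j) v) = (volume : Measure (Fin p → ℝ)).withDensity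
          (fun x => ∏ j, gaussianPDF (B i j) v (x j)) := by
    intro i
    have : ∀ j, gaussianReal (B i j) v =
      (volume : Measure ℝ).withDensity (gaussianPDF (B i j) v) :=
      fun j => gaussianReal_of_var_ne_zero _ hv
    simp_rw [this]
    have : ∀ j, SigmaFinite ((volume : Measure ℝ).withDensity
      (gaussianPDF (B i j) v)) := fun j => by rw [← this]; infer_instance
    exact pi_withDensity _ (fun j => measurable_gaussianPDF _ _)
  have hm : ∀ i, Measurable (fun x : Fin p → ℝ =>
      ∏ j, gaussianPDF (B i j) v (x j)) := fun i =>
    Finset.measurable_prod _ (fun j _ => (measurable_gaussianPDF _ _).comp (measurable_pi_apply j))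
  have : ∀ i, SigmaFinite ((volume : Measure (Fin p → ℝ)).withDensity
          (fun x => ∏ j, gaussianPDF (B i j) v (x j))) := fun i => by
    rw [← h1]; infer_instance
  refine ⟨∏ i : Fin N, ∏ j : Fin p, (Real.sqrt (2 * Real.pi * σ ^ 2))⁻¹, by positivity, ?_⟩
  simp_rw [h1]
  rw [pi_withDensity _ hm]
  congr 1
  ext Y
  simp only [gaussianPDF]
  have : ∀ i, ∏ j, ENNReal.ofReal (gaussianPDFReal (B i j) v (Y i j)) =
      ENNReal.ofReal (∏ j, (gaussianPDFReal (B i j) v (Y i j))) := fun i =>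
    (ENNReal.ofReal_prod_of_nonneg (fun j _ => gaussianPDFReal_nonneg _ _ _)).symm
  simp_rw [this]
  rw [← ENNReal.ofReal_prod_of_nonneg
    (fun i _ => Finset.prod_nonneg (fun j _ => gaussianPDFReal_nonneg _ _ _))]
  congr 1
  simp only [gaussianPDFReal, hvσ, Finset.prod_mul_distrib, ← Real.exp_sum]
  congr 2
  rw [← Finset.sum_neg_distrib, Finset.sum_div]
  refine Finset.sum_congr rfl (fun i _ => ?_)
  rw [← Finset.sum_neg_distrib, Finset.sum_div]

end KR

namespace KR
open scoped ENNReal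

lemma integrable_poly_gauss (P : Polynomial ℝ) (l σ : ℝ) (hσ : 0 < σ) :
    Integrable (fun z : ℝ => Real.exp (-(z - l) ^ 2 / (2 * σ ^ 2)) * P.eval z) := by
  have hmono : ∀ k : ℕ, Integrable (fun z : ℝ => Real.exp (-(z - l) ^ 2 / (2 * σ ^ 2)) * z ^ k) := by
    intro k
    have hv : (Real.toNNReal (σ ^ 2)) ≠ 0 := by
      simp only [ne_eq, Real.toNNReal_eq_zero, not_le]; positivity
    have h1 : Integrable (fun z : ℝ => z ^ k) (gaussianReal l (Real.toNNReal (σ ^ 2))) := by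
      have h2 := (memLp_id_gaussianReal (μ := l) (v := Real.toNNReal (σ ^ 2)) (k : NNReal))
      rcases Nat.eq_zero_or_pos k with rfl | hk
      · simp
      · have := h2.integrable_norm_pow'
        simp only [id] at this
        refine (integrable_norm_iff (by fun_prop)).1 ?_
        simpa [norm_pow] using this
    rw [gaussianReal_of_var_ne_zero _ hv, integrable_withDensity_iff (measurable_gaussianPDF _ _)
      (Filter.Eventually.of_forall fun x => gaussianPDF_lt_top)] at h1
    have h3 := h1.const_mul (Real.sqrt (2 * Real.pi * σ ^ 2))
    refine h3.congr (Filter.Eventually.of_forall fun z => ?_)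
    simp only [toReal_gaussianPDF, gaussianPDFReal, Real.coe_toNNReal _ (sq_nonneg σ)]
    have : Real.sqrt (2 * Real.pi * σ ^ 2) ≠ 0 := by positivity
    field_simp
  simp_rw [Polynomial.eval_eq_sum_range, Finset.mul_sum]
  refine integrable_finsetSum _ (fun k _ => ?_)
  refine ((hmono k).const_mul (P.coeff k)).congr (Filter.Eventually.of_forall fun z => ?_)
  simp only; ring

section oneD

lemma tail_hasDeriv {w : ℝ → ℝ} (hc : Continuous w) (hi : Integrable w) (z : ℝ) : HasDerivAt (fun c => ∫ x in Set.Ioi c, w x) (-w z) z := by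
  have h : (fun c => ∫ x in Set.Ioi c, w x) =
      fun c => (∫ x in Set.Ioi 0, w x) - ∫ x in (0 : ℝ)..c, w x := by
    ext c
    rw [← intervalIntegral.integral_interval_add_Ioi (a := 0) (b := c) hi.integrableOn hi.integrableOn]
    ring
  rw [h]
  exact ((hc.integral_hasStrictDerivAt 0 z).hasDerivAt).const_sub _

lemma tail_strictAnti {w : ℝ → ℝ} (hc : Continuous w) (hi : Integrable w) {r : ℝ} (hpos : ∀ z, r < z → 0 < w z) : StrictAntiOn (fun c => ∫ x in Set.Ioi c, w x) (Set.Ici r) := by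
  refine strictAntiOn_of_deriv_neg (convex_Ici r)
    (fun z _ => (tail_hasDeriv hc hi z).continuousAt.continuousWithinAt) (fun z hz => ?_)
  rw [interior_Ici] at hz
  rw [(tail_hasDeriv hc hi z).deriv]
  linarith [hpos z hz]

lemma tail_pos {w : ℝ → ℝ} (hc : Continuous w) (hi : Integrable w) {r : ℝ} (hpos : ∀ z, r < z → 0 < w z) {z : ℝ} (hz : r ≤ z) : 0 < ∫ x in Set.Ioi z, w x := by
  have h1 : (∫ x in Set.Ioi (z+1), w x) < ∫ x in Set.Ioi z, w x :=
    tail_strictAnti hc hi hpos hz (show r ≤ z + 1 by linarith) (by linarith)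
  have h2 : 0 ≤ ∫ x in Set.Ioi (z+1), w x :=
    setIntegral_nonneg measurableSet_Ioi (fun x hx => (hpos x (by
      have : z + 1 < x := hx
      linarith)).le)
  linarith

lemma tail_image {w : ℝ → ℝ} (hc : Continuous w) (hi : Integrable w) {r : ℝ} (hpos : ∀ z, r < z → 0 < w z) : (fun z => (∫ x in Set.Ioi z, w x) / ∫ x in Set.Ioi r, w x) '' (Set.Ioi r) =
    Set.Ioo 0 1 := by
  have hr := tail_pos hc hi hpos le_rfl
  ext u
  constructor
  · rintro ⟨z, hz, rfl⟩
    have hz' : r < z := hz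
    refine ⟨div_pos (tail_pos hc hi hpos hz'.le) hr, (div_lt_one hr).2 ?_⟩
    exact tail_strictAnti hc hi hpos (Set.self_mem_Ici) hz'.le hz'
  · rintro ⟨hu0, hu1⟩
    have ht : Filter.Tendsto (fun c => ∫ x in Set.Ioi c, w x) Filter.atTop (nhds 0) := by
      have h := intervalIntegral_tendsto_integral_Ioi r hi.integrableOn Filter.tendsto_id
      have h' := h.const_sub (∫ x in Set.Ioi r, w x)
      rw [sub_self] at h'
      refine h'.congr (fun c => ?_)
      rw [← intervalIntegral.integral_interval_add_Ioi (a := r) (b := c) hi.integrableOn hi.integrableOn]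
      simp
    have hupos : 0 < u * ∫ x in Set.Ioi r, w x := mul_pos hu0 hr
    obtain ⟨b, hb1, hb2⟩ := ((ht.eventually_lt_const hupos).and (Filter.eventually_ge_atTop r)).exists
    have hcont : ContinuousOn (fun c => ∫ x in Set.Ioi c, w x) (Set.Icc r b) :=
      fun z _ => (tail_hasDeriv hc hi z).continuousAt.continuousWithinAt
    have hur : u * (∫ x in Set.Ioi r, w x) < ∫ x in Set.Ioi r, w x := by
      nlinarith
    obtain ⟨z, hz, hzu⟩ := intermediate_value_Icc' hb2 hcont ⟨hb1.le, hur.le⟩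
    refine ⟨z, ?_, ?_⟩
    · rcases hz.1.eq_or_lt with h | h
      · exfalso
        subst h
        exact hur.ne' hzu
      · exact h
    · simp only at hzu ⊢
      rw [hzu, mul_div_assoc, div_self hr.ne', mul_one]

lemma oneD {w : ℝ → ℝ} (hc : Continuous w) (hi : Integrable w) {r : ℝ} (hpos : ∀ z, r < z → 0 < w z) (κ : ℝ) (hκ : κ ≠ 0) (g : ℝ → ℝ≥0∞) :
    ∫⁻ s in {s : ℝ | r < κ * s}, ENNReal.ofReal (w (κ * s)) *
      g ((∫ x in Set.Ioi (κ * s), w x) / ∫ x in Set.Ioi r, w x) =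
    ENNReal.ofReal ((∫ x in Set.Ioi r, w x) / |κ|) * ∫⁻ u in Set.Ioo 0 1, g u := by
  have hr := tail_pos hc hi hpos le_rfl
  have hms : MeasurableSet {s : ℝ | r < κ * s} := measurableSet_lt measurable_const (by fun_prop)
  have himg : (fun s => (∫ x in Set.Ioi (κ * s), w x) / ∫ x in Set.Ioi r, w x) ''
      {s : ℝ | r < κ * s} = Set.Ioo 0 1 := by
    rw [← tail_image hc hi hpos]
    ext u
    constructor
    · rintro ⟨s, hs, rfl⟩
      exact ⟨κ * s, hs, rfl⟩
    · rintro ⟨z, hz, rfl⟩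
      refine ⟨z / κ, ?_, ?_⟩
      · simpa [mul_div_cancel₀ _ hκ] using hz
      · simp only [mul_div_cancel₀ _ hκ]
  have hinj : Set.InjOn (fun s => (∫ x in Set.Ioi (κ * s), w x) / ∫ x in Set.Ioi r, w x)
      {s : ℝ | r < κ * s} := by
    intro s hs s' hs' h
    have h1 : (∫ x in Set.Ioi (κ * s), w x) = ∫ x in Set.Ioi (κ * s'), w x :=
      (div_left_inj' hr.ne').1 h
    have := (tail_strictAnti hc hi hpos).injOn (show r ≤ κ * s from le_of_lt hs)
      (show r ≤ κ * s' from le_of_lt hs') h1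
    exact mul_left_cancel₀ hκ this
  have hder : ∀ s ∈ {s : ℝ | r < κ * s}, HasDerivWithinAt
      (fun s => (∫ x in Set.Ioi (κ * s), w x) / ∫ x in Set.Ioi r, w x)
      (-w (κ * s) * κ / ∫ x in Set.Ioi r, w x) {s : ℝ | r < κ * s} s := by
    intro s _
    have h1 : HasDerivAt (fun s : ℝ => κ * s) κ s := by
      simpa using (hasDerivAt_id s).const_mul κ
    exact ((((tail_hasDeriv hc hi (κ * s)).comp s h1)).div_const _).hasDerivWithinAt
  have := lintegral_image_eq_lintegral_abs_deriv_mul hms hder hinj g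
  rw [himg] at this
  rw [this, ← lintegral_const_mul' _ _ ENNReal.ofReal_ne_top]
  refine setLIntegral_congr_fun hms (fun s hs => ?_)
  rw [← mul_assoc, ← ENNReal.ofReal_mul (by positivity)]
  congr 2
  have hκ' : 0 < |κ| := abs_pos.2 hκ
  rw [abs_div, abs_mul, abs_neg, abs_of_pos hr, abs_of_pos (hpos _ hs)]
  field_simp
end oneD
end KR

namespace KR
open scoped ENNReal

/-- Parameter space: `((s, M), (x, y))`. -/
abbrev E (a b : Type) := (ℝ × (a → b → ℝ)) × ((a → ℝ) × (b → ℝ))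

section det
lemma det_shear {E₁ E₂ : Type} [AddCommGroup E₁] [Module ℝ E₁] [AddCommGroup E₂] [Module ℝ E₂]
    [FiniteDimensional ℝ E₁] [FiniteDimensional ℝ E₂] (l : E₂ →ₗ[ℝ] E₁) (A : E₂ →ₗ[ℝ] E₂) :
    LinearMap.det ((LinearMap.fst ℝ E₁ E₂ + l ∘ₗ LinearMap.snd ℝ E₁ E₂).prod
      (A ∘ₗ LinearMap.snd ℝ E₁ E₂)) = LinearMap.det A := by
  classical
  let b₁ := Module.finBasis ℝ E₁
  let b₂ := Module.finBasis ℝ E₂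
  rw [← LinearMap.det_toMatrix (b₁.prod b₂), ← LinearMap.det_toMatrix b₂]
  have : LinearMap.toMatrix (b₁.prod b₂) (b₁.prod b₂)
      ((LinearMap.fst ℝ E₁ E₂ + l ∘ₗ LinearMap.snd ℝ E₁ E₂).prod
      (A ∘ₗ LinearMap.snd ℝ E₁ E₂)) =
      fromBlocks 1 (LinearMap.toMatrix b₂ b₁ l) 0 (LinearMap.toMatrix b₂ b₂ A) := by
    ext (i | i) (j | j)
    · simp [LinearMap.toMatrix_apply, Matrix.one_apply, Finsupp.single_apply, eq_comm]
    · simp [LinearMap.toMatrix_apply]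
    · simp [LinearMap.toMatrix_apply]
    · simp [LinearMap.toMatrix_apply]
  rw [this, Matrix.det_fromBlocks_zero₂₁]
  simp
end det

variable {a b : Type} [Fintype a] [Fintype b] [DecidableEq a] [DecidableEq b]

/-- `1 + x xᵀ` -/
def K (x : a → ℝ) : Matrix a a ℝ := 1 + vecMulVec x x
/-- the matrix with the remaining squared singular values as eigenvalues -/
def Nm (M : Matrix a b ℝ) (x : a → ℝ) (y : b → ℝ) : Matrix b b ℝ := K y * Mᵀ * K x * M
noncomputable def Amat (s : ℝ) (M : Matrix a b ℝ) (x : a → ℝ) (y : b → ℝ) : Matrix (a ⊕ b) (a ⊕ b) ℝ :=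
  fromBlocks (s • (1 - (1 + x ⬝ᵥ x)⁻¹ • vecMulVec x x)) (-(1 + y ⬝ᵥ y)⁻¹ • M)
    (-(1 + x ⬝ᵥ x)⁻¹ • Mᵀ) (s • (1 - (1 + y ⬝ᵥ y)⁻¹ • vecMulVec y y))

lemma one_add_pos (x : a → ℝ) : 0 < 1 + x ⬝ᵥ x := by
  have : 0 ≤ x ⬝ᵥ x := Finset.sum_nonneg (fun i _ => mul_self_nonneg _)
  linarith

lemma K_mul (x : a → ℝ) : K x * (1 - (1 + x ⬝ᵥ x)⁻¹ • vecMulVec x x) = 1 := by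
  have h := (one_add_pos x).ne'
  rw [K, add_mul, mul_sub, mul_sub, one_mul, mul_one, Matrix.mul_smul, Matrix.mul_smul, one_mul,
    vecMulVec_mul_vecMulVec]
  have : (x ⬝ᵥ x) • vecMulVec x x = (1 + x ⬝ᵥ x) • vecMulVec x x - vecMulVec x x := by
    rw [add_smul, one_smul]; abel
  rw [vecMulVec_smul, this, smul_sub, smul_smul, inv_mul_cancel₀ h, one_smul]
  abel

lemma det_Amat (M : Matrix a b ℝ) (x : a → ℝ) (y : b → ℝ) (hab : Fintype.card b ≤ Fintype.card a) :
    ∃ c : ℝ, ∀ s : ℝ, s ≠ 0 → ∀ κ : ℝ, κ ^ 2 = (1 + x ⬝ᵥ x) * (1 + y ⬝ᵥ y) →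
      |(Amat s M x y).det| = c * (|κ * s| ^ (Fintype.card a - Fintype.card b) *
        |((κ * s) ^ 2 • (1 : Matrix b b ℝ) - Nm M x y).det|) := by
  have hx := one_add_pos x
  have hy := one_add_pos y
  have hKx : (K x).det ≠ 0 := fun h => by
    have := congrArg Matrix.det (K_mul x)
    rw [det_mul, h, zero_mul, det_one] at this
    exact zero_ne_one this
  have hKy : (K y).det ≠ 0 := fun h => by
    have := congrArg Matrix.det (K_mul y)
    rw [det_mul, h, zero_mul, det_one] at this
    exact zero_ne_one this
  set α := 1 + x ⬝ᵥ x with hα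
  set β := 1 + y ⬝ᵥ y with hβ
  refine ⟨|(K x).det * (K y).det|⁻¹ * ((Real.sqrt (α * β)) ^ (Fintype.card a - Fintype.card b))⁻¹ *
    ((α * β) ^ (Fintype.card b))⁻¹, fun s hs κ hκ => ?_⟩
  have h1 : fromBlocks (K x) 0 0 (K y) * Amat s M x y =
      fromBlocks (s • 1) (-β⁻¹ • (K x * M)) (-α⁻¹ • (K y * Mᵀ)) (s • 1) := by
    rw [Amat, fromBlocks_multiply]
    simp only [Matrix.zero_mul, Matrix.mul_smul, smul_zero, add_zero, zero_add]
    rw [K_mul x, K_mul y]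
  have h2 : (fromBlocks (K x) 0 0 (K y) * Amat s M x y) *
      fromBlocks 1 (β⁻¹ • (K x * M)) 0 (s • 1) =
      fromBlocks (s • 1) 0 (-α⁻¹ • (K y * Mᵀ)) (s ^ 2 • 1 - (α * β)⁻¹ • Nm M x y) := by
    rw [h1, fromBlocks_multiply]
    congr 1
    · simp
    · simp only [Matrix.smul_mul, Matrix.mul_smul, Matrix.one_mul, Matrix.mul_one, smul_smul]
      rw [← add_smul]
      convert zero_smul ℝ (K x * M) using 2
      ring
    · simp
    · simp only [Matrix.smul_mul, Matrix.mul_smul, Matrix.one_mul, Matrix.mul_one, smul_smul, Nm,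
        Matrix.mul_assoc]
      rw [sub_eq_add_neg, add_comm, ← neg_smul]
      congr 2
      · ring
      · rw [mul_inv]; ring
  have h3 := congrArg Matrix.det h2
  rw [det_mul, det_mul, det_fromBlocks_zero₁₂, det_fromBlocks_zero₂₁, det_fromBlocks_zero₁₂,
    det_one, det_smul, det_smul, det_one, det_one] at h3
  have h4 : (κ * s) ^ 2 • (1 : Matrix b b ℝ) - Nm M x y =
      (α * β) • (s ^ 2 • 1 - (α * β)⁻¹ • Nm M x y) := by
    rw [smul_sub, smul_smul, smul_smul, mul_inv_cancel₀ (mul_pos hx hy).ne', one_smul, mul_pow, hκ]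
  rw [h4, det_smul]
  have h5 := congrArg abs h3
  have hκ' : |κ| = Real.sqrt (α * β) := by rw [← hκ, Real.sqrt_sq_eq_abs]
  simp only [abs_mul, abs_pow, one_mul, mul_one] at h5
  rw [abs_mul κ s, hκ', abs_mul, abs_mul, abs_pow, abs_mul, abs_of_pos hx, abs_of_pos hy, mul_pow]
  have hs' : 0 < |s| := abs_pos.2 hs
  obtain ⟨k, hk⟩ := Nat.exists_eq_add_of_le hab
  rw [hk] at h5 ⊢
  rw [Nat.add_sub_cancel_left]
  have hsq : 0 < Real.sqrt (α * β) := Real.sqrt_pos.2 (mul_pos hx hy)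
  have hKx' := abs_pos.2 hKx
  have hKy' := abs_pos.2 hKy
  have h6 : |(K x).det| * |(K y).det| * |(Amat s M x y).det| =
      |s| ^ k * |(s ^ 2 • (1 : Matrix b b ℝ) - (α * β)⁻¹ • Nm M x y).det| := by
    have : 0 < |s| ^ (Fintype.card b) := by positivity
    apply mul_right_cancel₀ this.ne'
    rw [h5]; ring
  rw [mul_inv]
  have h7 : |(Amat s M x y).det| = |(K x).det|⁻¹ * |(K y).det|⁻¹ *
      (|s| ^ k * |(s ^ 2 • (1 : Matrix b b ℝ) - (α * β)⁻¹ • Nm M x y).det|) := by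
    rw [← h6]; field_simp
  rw [h7]
  field_simp
  ring

end KR

namespace KR
open scoped ENNReal
variable {a b : Type} [Fintype a] [Fintype b] [DecidableEq a] [DecidableEq b]

/-- the chart -/
def chart (q : E a b) : E a b :=
  ((q.1.1 + q.2.1 ⬝ᵥ (Matrix.of q.1.2 *ᵥ q.2.2),
    fun i j => q.1.1 * q.2.1 i * q.2.2 j + q.1.2 i j),
    (q.1.1 • q.2.1 - Matrix.of q.1.2 *ᵥ q.2.2, q.1.1 • q.2.2 - q.2.1 ᵥ* Matrix.of q.1.2))

/-- derivative of the chart -/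
def dchart (q h : E a b) : E a b :=
  ((h.1.1 + h.2.1 ⬝ᵥ (Matrix.of q.1.2 *ᵥ q.2.2) + q.2.1 ⬝ᵥ (Matrix.of h.1.2 *ᵥ q.2.2)
      + q.2.1 ⬝ᵥ (Matrix.of q.1.2 *ᵥ h.2.2),
    fun i j => h.1.1 * q.2.1 i * q.2.2 j + q.1.1 * h.2.1 i * q.2.2 j + q.1.1 * q.2.1 i * h.2.2 j
      + h.1.2 i j),
    (h.1.1 • q.2.1 + q.1.1 • h.2.1 - Matrix.of h.1.2 *ᵥ q.2.2 - Matrix.of q.1.2 *ᵥ h.2.2,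
     h.1.1 • q.2.2 + q.1.1 • h.2.2 - h.2.1 ᵥ* Matrix.of q.1.2 - q.2.1 ᵥ* Matrix.of h.1.2))

/-- moving frame map -/
def frame (x : a → ℝ) (y : b → ℝ) : E a b →ₗ[ℝ] E a b where
  toFun h := ((h.1.1 - x ⬝ᵥ h.2.1 - y ⬝ᵥ h.2.2 + x ⬝ᵥ (Matrix.of h.1.2 *ᵥ y),
    fun i j => h.1.1 * x i * y j + h.2.1 i * y j + x i * h.2.2 j + h.1.2 i j),
    (h.1.1 • x + h.2.1 - (y ⬝ᵥ h.2.2) • x - Matrix.of h.1.2 *ᵥ y,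
     h.1.1 • y + h.2.2 - (x ⬝ᵥ h.2.1) • y - x ᵥ* Matrix.of h.1.2))
  map_add' h h' := by
    have e1 : Matrix.of (h.1.2 + h'.1.2) = Matrix.of h.1.2 + Matrix.of h'.1.2 := rfl
    ext
    · simp only [e1, Prod.fst_add, Prod.snd_add, dotProduct_add, add_mulVec]; ring
    · simp only [Prod.fst_add, Prod.snd_add, Pi.add_apply]; ring
    · simp only [e1, Prod.fst_add, Prod.snd_add, dotProduct_add, add_mulVec, Pi.add_apply,
        Pi.sub_apply, Pi.smul_apply, smul_eq_mul]; ring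
    · simp only [e1, Prod.fst_add, Prod.snd_add, dotProduct_add, vecMul_add, Pi.add_apply,
        Pi.sub_apply, Pi.smul_apply, smul_eq_mul]; ring
  map_smul' c h := by
    have e1 : Matrix.of (c • h.1.2) = c • Matrix.of h.1.2 := rfl
    ext
    · simp only [e1, Prod.smul_fst, Prod.smul_snd, dotProduct_smul, smul_mulVec, smul_eq_mul,
        RingHom.id_apply]; ring
    · simp only [Prod.smul_fst, Prod.smul_snd, Pi.smul_apply, smul_eq_mul, RingHom.id_apply]; ring
    · simp only [e1, Prod.smul_fst, Prod.smul_snd, dotProduct_smul, smul_mulVec, smul_eq_mul,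
        RingHom.id_apply, Pi.add_apply, Pi.sub_apply, Pi.smul_apply]; ring
    · simp only [e1, Prod.smul_fst, Prod.smul_snd, dotProduct_smul, vecMul_smul, smul_eq_mul,
        RingHom.id_apply, Pi.add_apply, Pi.sub_apply, Pi.smul_apply]; ring

/-- off-diagonal part -/
noncomputable def lpart (s : ℝ) (M : a → b → ℝ) (x : a → ℝ) (y : b → ℝ) :
    ((a → ℝ) × (b → ℝ)) →ₗ[ℝ] (ℝ × (a → b → ℝ)) where
  toFun h := (s * (x ⬝ᵥ h.1) * (1 + x ⬝ᵥ x)⁻¹ + s * (y ⬝ᵥ h.2) * (1 + y ⬝ᵥ y)⁻¹,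
    fun i j => (1 + x ⬝ᵥ x)⁻¹ * (x i * (h.1 ᵥ* Matrix.of M) j) +
      (1 + y ⬝ᵥ y)⁻¹ * ((Matrix.of M *ᵥ h.2) i * y j))
  map_add' h h' := by
    ext
    · simp only [Prod.fst_add, Prod.snd_add, dotProduct_add]; ring
    · simp only [Prod.fst_add, Prod.snd_add, mulVec_add, add_vecMul, Pi.add_apply]; ring
  map_smul' c h := by
    ext
    · simp only [Prod.smul_fst, Prod.smul_snd, dotProduct_smul, smul_eq_mul,
        RingHom.id_apply]; ring
    · simp only [Prod.smul_fst, Prod.smul_snd, mulVec_smul, smul_vecMul, smul_eq_mul,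
        RingHom.id_apply, Pi.smul_apply]; ring

/-- diagonal part -/
noncomputable def Apart (s : ℝ) (M : a → b → ℝ) (x : a → ℝ) (y : b → ℝ) :
    ((a → ℝ) × (b → ℝ)) →ₗ[ℝ] ((a → ℝ) × (b → ℝ)) :=
  (LinearEquiv.sumArrowLequivProdArrow a b ℝ ℝ).toLinearMap ∘ₗ
    (Matrix.toLin' (Amat s (Matrix.of M) x y)) ∘ₗ
    (LinearEquiv.sumArrowLequivProdArrow a b ℝ ℝ).symm.toLinearMap

lemma Apart_apply (s : ℝ) (M : a → b → ℝ) (x : a → ℝ) (y : b → ℝ) (h : (a → ℝ) × (b → ℝ)) :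
    Apart s M x y h =
      (s • h.1 - (s * (x ⬝ᵥ h.1) * (1 + x ⬝ᵥ x)⁻¹) • x - (1 + y ⬝ᵥ y)⁻¹ • (Matrix.of M *ᵥ h.2),
       s • h.2 - (s * (y ⬝ᵥ h.2) * (1 + y ⬝ᵥ y)⁻¹) • y - (1 + x ⬝ᵥ x)⁻¹ • (h.1 ᵥ* Matrix.of M)) := by
  have hs : (LinearEquiv.sumArrowLequivProdArrow a b ℝ ℝ).symm h = Sum.elim h.1 h.2 := by
    ext (i | i) <;> rfl
  simp only [Apart, LinearMap.comp_apply, LinearEquiv.coe_coe, hs, Matrix.toLin'_apply, Amat,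
    fromBlocks_mulVec, Sum.elim_comp_inl, Sum.elim_comp_inr]
  have o1 : (-(1 + y ⬝ᵥ y)⁻¹ • Matrix.of M) *ᵥ h.2 = -((1 + y ⬝ᵥ y)⁻¹ • (Matrix.of M *ᵥ h.2)) := by
    rw [smul_mulVec, neg_smul]
  rw [o1]
  ext i
  · simp [sub_mulVec, smul_mulVec, vecMulVec_mulVec, neg_mulVec]
    ring
  · simp [sub_mulVec, smul_mulVec, vecMulVec_mulVec, neg_mulVec, mulVec_transpose]
    ring

lemma det_Apart (s : ℝ) (M : a → b → ℝ) (x : a → ℝ) (y : b → ℝ) :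
    LinearMap.det (Apart s M x y) = (Amat s (Matrix.of M) x y).det := by
  rw [Apart]
  have := LinearMap.det_conj (Matrix.toLin' (Amat s (Matrix.of M) x y))
    (LinearEquiv.sumArrowLequivProdArrow a b ℝ ℝ)
  rw [LinearMap.det_toLin'] at this
  exact this

/-- triangular part -/
noncomputable def Tpart (q : E a b) : E a b →ₗ[ℝ] E a b :=
  (LinearMap.fst ℝ _ _ + lpart q.1.1 q.1.2 q.2.1 q.2.2 ∘ₗ LinearMap.snd ℝ _ _).prod
      (Apart q.1.1 q.1.2 q.2.1 q.2.2 ∘ₗ LinearMap.snd ℝ _ _)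

lemma dchart_eq (q h : E a b) : dchart q h = frame q.2.1 q.2.2 (Tpart q h) := by
  obtain ⟨⟨s, M⟩, x, y⟩ := q
  obtain ⟨⟨τ, μ⟩, ξ, η⟩ := h
  have hx := (one_add_pos x).ne'
  have hy := (one_add_pos y).ne'
  have hT : Tpart ((s, M), x, y) ((τ, μ), ξ, η) = ((τ, μ) + lpart s M x y (ξ, η),
    Apart s M x y (ξ, η)) := rfl
  rw [hT, Apart_apply]
  have e1 : Matrix.of ((τ, μ) + lpart s M x y (ξ, η)).2 = Matrix.of μ +
      (1 + x ⬝ᵥ x)⁻¹ • vecMulVec x (ξ ᵥ* Matrix.of M) +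
      (1 + y ⬝ᵥ y)⁻¹ • vecMulVec (Matrix.of M *ᵥ η) y := by
    ext i j
    simp [lpart, vecMulVec_apply]
    ring
  have e2 : ((τ, μ) + lpart s M x y (ξ, η)).1 =
    τ + (s * (x ⬝ᵥ ξ) * (1 + x ⬝ᵥ x)⁻¹ + s * (y ⬝ᵥ η) * (1 + y ⬝ᵥ y)⁻¹) := rfl
  have e3 : ∀ i j, ((τ, μ) + lpart s M x y (ξ, η)).2 i j = μ i j +
      ((1 + x ⬝ᵥ x)⁻¹ * (x i * (ξ ᵥ* Matrix.of M) j) +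
      (1 + y ⬝ᵥ y)⁻¹ * ((Matrix.of M *ᵥ η) i * y j)) := fun i j => rfl
  have d1 : ξ ⬝ᵥ (Matrix.of M *ᵥ y) = y ⬝ᵥ (ξ ᵥ* Matrix.of M) := by
    rw [dotProduct_mulVec, dotProduct_comm]
  have d2 : (ξ ᵥ* Matrix.of M) ⬝ᵥ y = y ⬝ᵥ (ξ ᵥ* Matrix.of M) := dotProduct_comm _ _
  have d3 : (x ᵥ* Matrix.of M) ⬝ᵥ η = x ⬝ᵥ (Matrix.of M *ᵥ η) := (dotProduct_mulVec _ _ _).symm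
  have d4 : x ⬝ᵥ ξ = ξ ⬝ᵥ x := dotProduct_comm _ _
  have d5 : y ⬝ᵥ η = η ⬝ᵥ y := dotProduct_comm _ _
  simp only [frame, LinearMap.coe_mk, AddHom.coe_mk, dchart, e1, e2, e3]
  ext i
  · simp only [dotProduct_add, dotProduct_sub, dotProduct_smul, add_mulVec, smul_mulVec,
      vecMulVec_mulVec, smul_eq_mul, d1, d2, op_smul_eq_smul]
    field_simp
    ring
  · simp only [Pi.add_apply, Pi.sub_apply, Pi.smul_apply, smul_eq_mul]
    field_simp
    ring
  · simp only [dotProduct_add, dotProduct_sub, dotProduct_smul, add_mulVec, smul_mulVec,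
      vecMulVec_mulVec, smul_eq_mul, d1, d2, op_smul_eq_smul,
      Pi.add_apply, Pi.sub_apply, Pi.smul_apply]
    field_simp
    ring
  · simp only [dotProduct_add, dotProduct_sub, dotProduct_smul, vecMul_add, vecMul_smul,
      vecMul_vecMulVec, smul_eq_mul, d1, d2, op_smul_eq_smul,
      Pi.add_apply, Pi.sub_apply, Pi.smul_apply]
    field_simp
    ring
end KR

namespace KR
open scoped ENNReal
variable {a b : Type} [Fintype a] [Fintype b] [DecidableEq a] [DecidableEq b]

lemma chart_contDiff : ContDiff ℝ 1 (chart : E a b → E a b) := by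
  unfold chart dotProduct mulVec vecMul dotProduct
  simp only [Matrix.of_apply]
  refine ContDiff.prodMk (ContDiff.prodMk ?_ ?_) (ContDiff.prodMk ?_ ?_)
  · fun_prop
  · fun_prop
  · apply ContDiff.sub
    · fun_prop
    · fun_prop
  · apply ContDiff.sub
    · fun_prop
    · fun_prop

lemma cubic_deriv {F : Type} [NormedAddCommGroup F] [NormedSpace ℝ F] (u v w z : F) :
    HasDerivAt (fun t : ℝ => u + t • v + t ^ 2 • w + t ^ 3 • z) v 0 := by
  have h1 := (hasDerivAt_id (0:ℝ)).smul_const v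
  have h2 := ((hasDerivAt_id (0:ℝ)).pow 2).smul_const w
  have h3 := ((hasDerivAt_id (0:ℝ)).pow 3).smul_const z
  have := ((h1.const_add u).add h2).add h3
  have e : (1:ℝ) • v + (((2:ℕ):ℝ) * id (0:ℝ) ^ (2 - 1) * 1) • w + (((3:ℕ):ℝ) * id (0:ℝ) ^ (3 - 1) * 1) • z = v := by
    simp only [id, one_smul]; norm_num
  rw [e] at this
  exact this

lemma chart_line (q h : E a b) : HasDerivAt (fun t : ℝ => chart (q + t • h)) (dchart q h) 0 := by
  have hc : (fun t : ℝ => chart (q + t • h)) = fun t => chart q + t • dchart q h +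
      t ^ 2 • ((h.2.1 ⬝ᵥ (Matrix.of h.1.2 *ᵥ q.2.2) + h.2.1 ⬝ᵥ (Matrix.of q.1.2 *ᵥ h.2.2) + q.2.1 ⬝ᵥ (Matrix.of h.1.2 *ᵥ h.2.2),
        fun i j => h.1.1 * h.2.1 i * q.2.2 j + h.1.1 * q.2.1 i * h.2.2 j + q.1.1 * h.2.1 i * h.2.2 j),
        (h.1.1 • h.2.1 - Matrix.of h.1.2 *ᵥ h.2.2, h.1.1 • h.2.2 - h.2.1 ᵥ* Matrix.of h.1.2))
      + t ^ 3 • ((h.2.1 ⬝ᵥ (Matrix.of h.1.2 *ᵥ h.2.2), fun i j => h.1.1 * h.2.1 i * h.2.2 j), (0, 0)) := by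
    funext t
    have e : Matrix.of (q.1.2 + t • h.1.2) = Matrix.of q.1.2 + t • Matrix.of h.1.2 := rfl
    ext i
    · simp only [chart, dchart, e, Prod.fst_add, Prod.snd_add, Prod.smul_fst, Prod.smul_snd, smul_eq_mul,
        mulVec_add, add_mulVec, mulVec_smul, smul_mulVec, dotProduct_add, add_dotProduct,
        dotProduct_smul, smul_dotProduct]
      ring
    · simp only [chart, dchart, e, Prod.fst_add, Prod.snd_add, Prod.smul_fst, Prod.smul_snd, smul_eq_mul,
        Pi.add_apply, Pi.smul_apply]
      ring
    · simp only [chart, dchart, e, Prod.fst_add, Prod.snd_add, Prod.smul_fst, Prod.smul_snd, smul_eq_mul,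
        mulVec_add, add_mulVec, mulVec_smul, smul_mulVec,
        Pi.add_apply, Pi.smul_apply, Pi.sub_apply, Pi.zero_apply]
      ring
    · simp only [chart, dchart, e, Prod.fst_add, Prod.snd_add, Prod.smul_fst, Prod.smul_snd, smul_eq_mul,
        vecMul_add, add_vecMul, vecMul_smul, smul_vecMul,
        Pi.add_apply, Pi.smul_apply, Pi.sub_apply, Pi.zero_apply]
      ring
  rw [hc]
  exact cubic_deriv _ _ _ _

lemma fderiv_chart (q h : E a b) : fderiv ℝ chart q h = dchart q h := by
  have hd : DifferentiableAt ℝ (chart : E a b → E a b) q := chart_contDiff.differentiable (by simp) q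
  have := hd.hasFDerivAt.comp_hasDerivAt_of_eq (0:ℝ)
    (((hasDerivAt_id (0:ℝ)).smul_const h).const_add q) (by simp)
  have h2 := this.unique (chart_line q h)
  simpa using h2

lemma det_chart (M : a → b → ℝ) (x : a → ℝ) (y : b → ℝ) (hab : Fintype.card b ≤ Fintype.card a) :
    ∃ c : ℝ, ∀ s : ℝ, s ≠ 0 → ∀ κ : ℝ, κ ^ 2 = (1 + x ⬝ᵥ x) * (1 + y ⬝ᵥ y) →
      |(fderiv ℝ chart (((s, M), (x, y)) : E a b)).det| = c * (|κ * s| ^ (Fintype.card a - Fintype.card b) *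
        |((κ * s) ^ 2 • (1 : Matrix b b ℝ) - Nm (Matrix.of M) x y).det|) := by
  obtain ⟨c, hc⟩ := det_Amat (Matrix.of M) x y hab
  refine ⟨|LinearMap.det (frame x y)| * c, fun s hs κ hκ => ?_⟩
  have : ((fderiv ℝ chart (((s, M), (x, y)) : E a b) : E a b →L[ℝ] E a b) : E a b →ₗ[ℝ] E a b) =
      frame x y ∘ₗ Tpart ((s, M), (x, y)) := by
    refine LinearMap.ext fun h => ?_
    exact (fderiv_chart _ _).trans (dchart_eq _ _)
  rw [ContinuousLinearMap.det, this, LinearMap.det_comp, Tpart, det_shear, det_Apart, abs_mul, hc s hs κ hκ, mul_assoc]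
end KR

namespace KR
open scoped ENNReal

section svd
variable {I J J0 : Type} [Fintype I] [Fintype J] [Fintype J0]

/-- rank-one plus orthogonal remainder -/
structure Split (Y Z : Matrix I J ℝ) (t r : ℝ) (u : I → ℝ) (v : J → ℝ) : Prop where
  eq : Y = t • vecMulVec u v + Z
  uu : u ⬝ᵥ u = 1
  vv : v ⬝ᵥ v = 1
  Zv : Z *ᵥ v = 0
  uZ : u ᵥ* Z = 0
  r0 : 0 ≤ r
  bd : ∀ w, (Z *ᵥ w) ⬝ᵥ (Z *ᵥ w) ≤ r ^ 2 * (w ⬝ᵥ w)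
  rt : r < |t|

variable {Y Z : Matrix I J ℝ} {t r : ℝ} {u : I → ℝ} {v : J → ℝ}

lemma dot_self_nonneg (w : I → ℝ) : 0 ≤ w ⬝ᵥ w := Finset.sum_nonneg (fun i _ => mul_self_nonneg _)

lemma Split.sq (h : Split Y Z t r u v) : r ^ 2 < t ^ 2 := by
  rw [← sq_abs t]; exact pow_lt_pow_left₀ h.rt h.r0 two_ne_zero

lemma Split.mulVec (h : Split Y Z t r u v) (w : J → ℝ) : Y *ᵥ w = (t * (v ⬝ᵥ w)) • u + Z *ᵥ w := by
  rw [h.eq, add_mulVec, smul_mulVec, vecMulVec_mulVec, op_smul_eq_smul, smul_smul]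

lemma Split.normSq (h : Split Y Z t r u v) (w : J → ℝ) :
    (Y *ᵥ w) ⬝ᵥ (Y *ᵥ w) = t ^ 2 * (v ⬝ᵥ w) ^ 2 + (Z *ᵥ w) ⬝ᵥ (Z *ᵥ w) := by
  have h1 : u ⬝ᵥ Z *ᵥ w = 0 := by rw [dotProduct_mulVec, h.uZ, zero_dotProduct]
  have h2 : (Z *ᵥ w) ⬝ᵥ u = 0 := by rw [dotProduct_comm, h1]
  rw [h.mulVec]
  simp only [dotProduct_add, add_dotProduct, smul_dotProduct, dotProduct_smul, h1, h2, h.uu, smul_eq_mul]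
  ring

lemma Split.proj (h : Split Y Z t r u v) (w : J → ℝ) :
    (w - (v ⬝ᵥ w) • v) ⬝ᵥ (w - (v ⬝ᵥ w) • v) = w ⬝ᵥ w - (v ⬝ᵥ w) ^ 2 := by
  simp only [dotProduct_sub, sub_dotProduct, smul_dotProduct, dotProduct_smul, h.vv, smul_eq_mul,
    dotProduct_comm w v]
  ring

lemma Split.Zproj (h : Split Y Z t r u v) (w : J → ℝ) : Z *ᵥ (w - (v ⬝ᵥ w) • v) = Z *ᵥ w := by
  rw [mulVec_sub, mulVec_smul, h.Zv, smul_zero, sub_zero]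

lemma Split.Zbd (h : Split Y Z t r u v) (w : J → ℝ) :
    (Z *ᵥ w) ⬝ᵥ (Z *ᵥ w) ≤ r ^ 2 * (w ⬝ᵥ w - (v ⬝ᵥ w) ^ 2) := by
  rw [← h.proj, ← h.Zproj]; exact h.bd _

/-- a unit vector with `|Yw|² ≥ t²` is `± v` -/
lemma Split.max (h : Split Y Z t r u v) (w : J → ℝ) (hw : w ⬝ᵥ w = 1)
    (hm : t ^ 2 ≤ (Y *ᵥ w) ⬝ᵥ (Y *ᵥ w)) : (v ⬝ᵥ w) ^ 2 = 1 ∧ w = (v ⬝ᵥ w) • v := by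
  have h1 := h.Zbd w
  have h2 := h.proj w
  have h3 := dot_self_nonneg (w - (v ⬝ᵥ w) • v)
  rw [h.normSq] at hm
  rw [hw] at h1 h2
  have h4 := h.sq
  have h5 : 1 - (v ⬝ᵥ w) ^ 2 = 0 := by
    apply le_antisymm _ (h2 ▸ h3)
    by_contra hc
    push Not at hc
    nlinarith
  refine ⟨by linarith, ?_⟩
  rw [h5, dotProduct_self_eq_zero, sub_eq_zero] at h2
  exact h2

lemma Split.self (h : Split Y Z t r u v) : (Y *ᵥ v) ⬝ᵥ (Y *ᵥ v) = t ^ 2 := by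
  rw [h.normSq, h.vv, h.Zv]; simp

lemma Split.le (h : Split Y Z t r u v) (w : J → ℝ) (hw : w ⬝ᵥ w = 1) :
    (Y *ᵥ w) ⬝ᵥ (Y *ᵥ w) ≤ t ^ 2 := by
  rw [h.normSq]
  have h1 := h.Zbd w
  have h2 := h.proj w
  have h3 := dot_self_nonneg (w - (v ⬝ᵥ w) • v)
  have h4 := h.sq
  rw [hw] at h1 h2
  nlinarith

lemma Split.unique {Z' : Matrix I J ℝ} {t' r' : ℝ} {u' : I → ℝ} {v' : J → ℝ}
    (h : Split Y Z t r u v) (h' : Split Y Z' t' r' u' v') : v' = (v ⬝ᵥ v') • v := by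
  apply (h.max v' h'.vv _).2
  rw [h'.self, ← h.self]
  exact h'.le v h.vv

variable [DecidableEq J0] [DecidableEq J]
/-- SVD data -/
structure IsSVD (Y : Matrix I J ℝ) (U : Matrix I J0 ℝ) (d : J0 → ℝ) (V : Matrix J J0 ℝ) (o : J0) : Prop where
  eq : Y = U * diagonal d * Vᵀ
  UU : Uᵀ * U = 1
  VV : Vᵀ * V = 1
  VV' : V * Vᵀ = 1
  nn : ∀ j, 0 ≤ d j
  mx : ∀ j, d j ≤ d o

variable {U : Matrix I J0 ℝ} {d : J0 → ℝ} {V : Matrix J J0 ℝ} {o : J0}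

lemma IsSVD.normSq (H : IsSVD Y U d V o) (w : J → ℝ) :
    (Y *ᵥ w) ⬝ᵥ (Y *ᵥ w) = ∑ j, d j ^ 2 * (Vᵀ *ᵥ w) j ^ 2 := by
  rw [H.eq, ← mulVec_mulVec, ← mulVec_mulVec]
  set y := diagonal d *ᵥ (Vᵀ *ᵥ w) with hy
  rw [dotProduct_mulVec, ← mulVec_transpose, mulVec_mulVec, H.UU, one_mulVec, dotProduct]
  refine Finset.sum_congr rfl fun j _ => ?_
  rw [hy, mulVec_diagonal]; ring

lemma IsSVD.wSq (H : IsSVD Y U d V o) (w : J → ℝ) : w ⬝ᵥ w = ∑ j, (Vᵀ *ᵥ w) j ^ 2 := by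
  have : (Vᵀ *ᵥ w) ⬝ᵥ (Vᵀ *ᵥ w) = w ⬝ᵥ w := by
    rw [dotProduct_mulVec, ← mulVec_transpose, mulVec_mulVec, transpose_transpose, H.VV', one_mulVec]
  rw [← this, dotProduct]
  exact Finset.sum_congr rfl fun j _ => by ring

lemma IsSVD.col (H : IsSVD Y U d V o) (j : J0) : Y *ᵥ (fun i => V i j) = d j • fun i => U i j := by
  have h1 : (fun i => V i j) = V *ᵥ (Pi.single j 1) := by
    rw [mulVec_single_one]; rfl
  have h2 : (fun i => U i j) = U *ᵥ (Pi.single j 1) := by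
    rw [mulVec_single_one]; rfl
  rw [h1, h2, H.eq, mulVec_mulVec, Matrix.mul_assoc, H.VV, Matrix.mul_one, ← mulVec_mulVec, ← mulVec_smul]
  congr 1
  ext k
  rw [mulVec_diagonal]
  by_cases hk : k = j
  · subst hk; simp
  · simp [hk]

lemma IsSVD.Vdot (H : IsSVD Y U d V o) (j k : J0) : (fun i => V i j) ⬝ᵥ (fun i => V i k) = if j = k then 1 else 0 := by
  have := congrFun (congrFun H.VV j) k
  rw [Matrix.mul_apply, Matrix.one_apply] at this
  exact this

lemma IsSVD.Udot (H : IsSVD Y U d V o) (j k : J0) : (fun i => U i j) ⬝ᵥ (fun i => U i k) = if j = k then 1 else 0 := by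
  have := congrFun (congrFun H.UU j) k
  rw [Matrix.mul_apply, Matrix.one_apply] at this
  exact this

lemma IsSVD.top (H : IsSVD Y U d V o) (h : Split Y Z t r u v) :
    d o = |t| ∧ ∃ c : ℝ, c ^ 2 = 1 ∧ (fun i => V i o) = c • v ∧ (fun i => U i o) = (c * (t / |t|)) • u := by
  have h0 : t ^ 2 ≤ d o ^ 2 := by
    rw [← h.self, H.normSq]
    calc ∑ j, d j ^ 2 * (Vᵀ *ᵥ v) j ^ 2 ≤ ∑ j, d o ^ 2 * (Vᵀ *ᵥ v) j ^ 2 := by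
          refine Finset.sum_le_sum fun j _ => ?_
          have := pow_le_pow_left₀ (H.nn j) (H.mx j) 2
          gcongr
      _ = d o ^ 2 := by rw [← Finset.mul_sum, ← H.wSq, h.vv, mul_one]
  have h1 : (Y *ᵥ (fun i => V i o)) ⬝ᵥ (Y *ᵥ (fun i => V i o)) = d o ^ 2 := by
    rw [H.col, smul_dotProduct, dotProduct_smul, H.Udot]; simp; ring
  obtain ⟨hc, hV⟩ := h.max (fun i => V i o) (by rw [H.Vdot]; simp) (h1 ▸ h0)
  set c := v ⬝ᵥ (fun i => V i o) with hcdef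
  have h2 : d o ^ 2 = t ^ 2 := by
    rw [← h1, hV, mulVec_smul, smul_dotProduct, dotProduct_smul, h.self, smul_smul, smul_eq_mul]
    rw [← pow_two, hc, one_mul]
  have h3 : d o = |t| := by
    rw [← abs_of_nonneg (H.nn o)]; exact sq_eq_sq_iff_abs_eq_abs _ _ |>.1 h2
  have ht : 0 < |t| := lt_of_le_of_lt h.r0 h.rt
  refine ⟨h3, c, hc, hV, ?_⟩
  have h4 := H.col o
  rw [hV, mulVec_smul, h.mulVec, h.vv, h.Zv, add_zero, mul_one, smul_smul, h3] at h4
  have h5 := congrArg (fun w => |t|⁻¹ • w) h4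
  simp only [smul_smul] at h5
  rw [inv_mul_cancel₀ ht.ne', one_smul] at h5
  rw [← h5]; congr 1; field_simp

lemma IsSVD.le_r (H : IsSVD Y U d V o) (h : Split Y Z t r u v) (j : J0) (hj : j ≠ o) : d j ≤ r := by
  obtain ⟨-, c, hc, hV, -⟩ := H.top h
  have hc0 : c ≠ 0 := by rintro rfl; norm_num at hc
  have h1 : v ⬝ᵥ (fun i => V i j) = 0 := by
    have := H.Vdot o j
    rw [hV, smul_dotProduct, if_neg hj.symm, smul_eq_mul] at this
    exact (mul_eq_zero.1 this).resolve_left hc0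
  have h2 := h.bd (fun i => V i j)
  have h3 := h.normSq (fun i => V i j)
  rw [h1, H.col, smul_dotProduct, dotProduct_smul, H.Udot] at h3
  rw [H.Vdot] at h2
  simp only [if_true, smul_eq_mul, mul_one] at h2 h3
  apply le_of_sq_le_sq _ h.r0
  nlinarith

lemma IsSVD.bd (H : IsSVD Y U d V o) (h : Split Y Z t r u v) (z : ℝ) (hz : ∀ j, j ≠ o → d j ≤ z) (hz0 : 0 ≤ z) (w : J → ℝ) :
    (Z *ᵥ w) ⬝ᵥ (Z *ᵥ w) ≤ z ^ 2 * (w ⬝ᵥ w) := by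
  obtain ⟨-, c, hc, hV, -⟩ := H.top h
  have hv : v ⬝ᵥ (w - (v ⬝ᵥ w) • v) = 0 := by
    rw [dotProduct_sub, dotProduct_smul, h.vv]; simp
  have h1 := h.normSq (w - (v ⬝ᵥ w) • v)
  have h3 := h.proj w
  rw [hv, h.Zproj, H.normSq] at h1
  have h2 : (Vᵀ *ᵥ (w - (v ⬝ᵥ w) • v)) o = 0 := by
    change (fun i => V i o) ⬝ᵥ _ = 0
    rw [hV, smul_dotProduct, hv, smul_zero]
  rw [H.wSq] at h3
  have h4 : ∑ j, d j ^ 2 * (Vᵀ *ᵥ (w - (v ⬝ᵥ w) • v)) j ^ 2 ≤ z ^ 2 * ∑ j, (Vᵀ *ᵥ (w - (v ⬝ᵥ w) • v)) j ^ 2 := by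
    rw [Finset.mul_sum]
    refine Finset.sum_le_sum fun j _ => ?_
    by_cases hj : j = o
    · subst hj; rw [h2]; simp
    · have := pow_le_pow_left₀ (H.nn j) (hz j hj) 2
      gcongr
  have h5 : 0 ≤ z ^ 2 * (v ⬝ᵥ w) ^ 2 := by positivity
  nlinarith

lemma IsSVD.det (H : IsSVD Y U d V o) (z : ℝ) : (z ^ 2 • 1 - Yᵀ * Y).det = ∏ j, (z ^ 2 - d j ^ 2) := by
  have h1 : (z ^ 2 • 1 - Yᵀ * Y) = V * diagonal (fun j => z ^ 2 - d j ^ 2) * Vᵀ := by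
    have : diagonal (fun j => z ^ 2 - d j ^ 2) = z ^ 2 • 1 - diagonal d * (diagonal d) := by
      rw [diagonal_mul_diagonal]
      ext i j
      by_cases hij : i = j
      · subst hij; simp; ring
      · simp [hij]
    rw [this, Matrix.mul_sub, Matrix.sub_mul, Matrix.mul_smul, Matrix.mul_one, Matrix.smul_mul, H.VV', H.eq]
    congr 1
    rw [transpose_mul, transpose_mul, transpose_transpose, diagonal_transpose]
    calc V * (diagonal d * Uᵀ) * (U * diagonal d * Vᵀ) = V * diagonal d * (Uᵀ * U) * (diagonal d * Vᵀ) := by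
          simp only [Matrix.mul_assoc]
      _ = _ := by rw [H.UU]; simp only [Matrix.mul_assoc, Matrix.mul_one, Matrix.one_mul]
  rw [h1, det_conj_of_mul_eq_one H.VV' H.VV, det_diagonal]
end svd
end KR

namespace KR
open scoped ENNReal
variable {a b : Type} [Fintype a] [Fintype b] [DecidableEq a] [DecidableEq b]

/-- assemble blocks -/
def full (q : E a b) : Matrix (Unit ⊕ a) (Unit ⊕ b) ℝ :=
  fromBlocks (Matrix.of fun _ _ => q.1.1) (Matrix.of fun _ j => q.2.2 j) (Matrix.of fun i _ => q.2.1 i)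
    (Matrix.of q.1.2)

/-- `(1, x)` -/
def ext1 (x : a → ℝ) : Unit ⊕ a → ℝ := Sum.elim (fun _ => 1) x

/-- the remainder -/
def Zm (M : a → b → ℝ) (x : a → ℝ) (y : b → ℝ) : Matrix (Unit ⊕ a) (Unit ⊕ b) ℝ :=
  full (chart ((0, M), (x, y)))

noncomputable def nrm (x : a → ℝ) : ℝ := Real.sqrt (1 + x ⬝ᵥ x)

lemma nrm_pos (x : a → ℝ) : 0 < nrm x := Real.sqrt_pos.2 (one_add_pos x)
lemma nrm_sq (x : a → ℝ) : nrm x ^ 2 = 1 + x ⬝ᵥ x := Real.sq_sqrt (one_add_pos x).le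
lemma ext1_dot (x : a → ℝ) : ext1 x ⬝ᵥ ext1 x = nrm x ^ 2 := by
  rw [nrm_sq, ext1, sumElim_dotProduct_sumElim]; simp [dotProduct]

noncomputable def unitv (x : a → ℝ) : Unit ⊕ a → ℝ := (nrm x)⁻¹ • ext1 x

lemma unitv_dot (x : a → ℝ) : unitv x ⬝ᵥ unitv x = 1 := by
  rw [unitv, smul_dotProduct, dotProduct_smul, ext1_dot, smul_eq_mul, smul_eq_mul]
  have := (nrm_pos x).ne'
  field_simp

noncomputable def kap (x : a → ℝ) (y : b → ℝ) : ℝ := nrm x * nrm y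

lemma kap_pos (x : a → ℝ) (y : b → ℝ) : 0 < kap x y := mul_pos (nrm_pos x) (nrm_pos y)
lemma kap_sq (x : a → ℝ) (y : b → ℝ) : kap x y ^ 2 = (1 + x ⬝ᵥ x) * (1 + y ⬝ᵥ y) := by
  rw [kap, mul_pow, nrm_sq, nrm_sq]

lemma full_chart (s : ℝ) (M : a → b → ℝ) (x : a → ℝ) (y : b → ℝ) :
    full (chart ((s, M), (x, y))) = (kap x y * s) • vecMulVec (unitv x) (unitv y) + Zm M x y := by
  have h1 : (kap x y * s) • vecMulVec (unitv x) (unitv y) = s • vecMulVec (ext1 x) (ext1 y) := by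
    have := (nrm_pos x).ne'
    have := (nrm_pos y).ne'
    rw [unitv, unitv, smul_vecMulVec, vecMulVec_smul, smul_smul, smul_smul, kap]
    congr 1
    field_simp
  rw [h1]
  ext (i | i) (j | j)
  · simp [full, chart, Zm, ext1, vecMulVec_apply]
  · simp [full, chart, Zm, ext1, vecMulVec_apply, sub_eq_add_neg]
  · simp [full, chart, Zm, ext1, vecMulVec_apply, sub_eq_add_neg]
  · simp [full, chart, Zm, ext1, vecMulVec_apply]; ring

/-- `[-x, 1]ᵀ` -/
def Lm (x : a → ℝ) : Matrix (Unit ⊕ a) a ℝ := fromRows (Matrix.of fun _ i => -x i) 1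

lemma Zm_eq (M : a → b → ℝ) (x : a → ℝ) (y : b → ℝ) : Zm M x y = Lm x * Matrix.of M * (Lm y)ᵀ := by
  rw [Lm, Lm, transpose_fromRows, fromRows_mul, fromRows_mul_fromCols, Matrix.one_mul, Zm, full]
  congr 1
  · ext i j
    simp [chart, Matrix.mul_apply, mulVec, dotProduct, Finset.sum_mul, Finset.mul_sum]
    rw [Finset.sum_comm]
    exact Finset.sum_congr rfl fun _ _ => Finset.sum_congr rfl fun _ _ => by ring
  · ext i j
    simp [chart, vecMul, dotProduct, Matrix.mul_apply (M := Matrix.of fun (_ : Unit) i => -x i)]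
  · ext i j
    simp [chart, Matrix.mul_apply, mulVec, dotProduct]
  · ext i j
    simp [chart]

lemma Lm_ext1 (x : a → ℝ) : (Lm x)ᵀ *ᵥ ext1 x = 0 := by
  rw [Lm, transpose_fromRows, ext1, fromCols_mulVec_sumElim]
  ext i
  simp [mulVec, dotProduct]

lemma Lm_unitv (x : a → ℝ) : (Lm x)ᵀ *ᵥ unitv x = 0 := by
  rw [unitv, mulVec_smul, Lm_ext1, smul_zero]

lemma Zv (M : a → b → ℝ) (x : a → ℝ) (y : b → ℝ) : Zm M x y *ᵥ unitv y = 0 := by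
  rw [Zm_eq, ← mulVec_mulVec, Lm_unitv, mulVec_zero]

lemma uZ (M : a → b → ℝ) (x : a → ℝ) (y : b → ℝ) : unitv x ᵥ* Zm M x y = 0 := by
  rw [Zm_eq, Matrix.mul_assoc, ← vecMul_vecMul, ← mulVec_transpose (Lm x), Lm_unitv, zero_vecMul]

lemma LL (x : a → ℝ) : (Lm x)ᵀ * Lm x = K x := by
  rw [Lm, transpose_fromRows, fromCols_mul_fromRows, K, add_comm]
  congr 1
  · simp
  · ext i j; simp [Matrix.mul_apply, vecMulVec_apply]

lemma det_full (s : ℝ) (M : a → b → ℝ) (x : a → ℝ) (y : b → ℝ) (z : ℝ) :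
    (z ^ 2 • 1 - (full (chart ((s, M), (x, y))))ᵀ * full (chart ((s, M), (x, y)))).det =
      (z ^ 2 - (kap x y * s) ^ 2) * (z ^ 2 • 1 - Nm (Matrix.of M) x y).det := by
  set t := kap x y * s with ht
  let P : Matrix (Unit ⊕ a) (Unit ⊕ a) ℝ := fromCols (Matrix.of fun i _ => unitv x i) (Lm x)
  let Q : Matrix (Unit ⊕ b) (Unit ⊕ b) ℝ := fromCols (Matrix.of fun i _ => unitv y i) (Lm y)
  let W : Matrix (Unit ⊕ a) (Unit ⊕ b) ℝ := fromBlocks (Matrix.of fun _ _ => t) 0 0 (Matrix.of M)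
  have hPP : ∀ {c : Type} [Fintype c] [DecidableEq c] (x : c → ℝ),
      (fromCols (Matrix.of fun i (_ : Unit) => unitv x i) (Lm x))ᵀ * fromCols (Matrix.of fun i (_ : Unit) => unitv x i) (Lm x) =
      fromBlocks 1 0 0 (K x) := by
    intro c _ _ x
    rw [transpose_fromCols, fromRows_mul_fromCols, LL]
    have h0 : (Lm x)ᵀ * (Matrix.of fun i (_ : Unit) => unitv x i) = 0 := by
      ext i j
      exact congrFun (Lm_unitv x) i
    congr 1
    · ext i j
      exact unitv_dot x
    · rw [← transpose_inj, transpose_mul, transpose_transpose, h0, transpose_zero]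
  have hY : full (chart ((s, M), (x, y))) = P * W * Qᵀ := by
    rw [full_chart, Zm_eq]
    simp only [P, Q, W, transpose_fromCols]
    rw [fromCols_mul_fromBlocks, fromCols_mul_fromRows]
    simp only [Matrix.mul_zero, add_zero, zero_add]
    congr 1
    ext i j
    simp [Matrix.mul_apply, vecMulVec_apply, ← ht]
    ring
  have h1 : (full (chart ((s, M), (x, y))))ᵀ * full (chart ((s, M), (x, y))) =
      Q * (Wᵀ * (fromBlocks (1 : Matrix Unit Unit ℝ) 0 0 (K x) : Matrix (Unit ⊕ a) (Unit ⊕ a) ℝ) * W * Qᵀ) := by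
    rw [hY, ← hPP x]
    simp only [transpose_mul, transpose_transpose, Matrix.mul_assoc]
    rfl
  have h2 : (Wᵀ * (fromBlocks (1 : Matrix Unit Unit ℝ) 0 0 (K x) : Matrix (Unit ⊕ a) (Unit ⊕ a) ℝ) * W * Qᵀ) * Q =
      fromBlocks (Matrix.of fun _ _ => t ^ 2) 0 0 ((Matrix.of M)ᵀ * K x * Matrix.of M * K y) := by
    rw [Matrix.mul_assoc _ Qᵀ Q, hPP y]
    simp only [W, fromBlocks_transpose, fromBlocks_multiply, transpose_zero, Matrix.mul_zero, Matrix.zero_mul, add_zero, zero_add, Matrix.mul_one]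
    congr 1
    ext i j
    simp [Matrix.mul_apply]
    ring
  have hcp : ∀ {c : Type} [Fintype c] [DecidableEq c] (A : Matrix c c ℝ), (z ^ 2 • 1 - A).det = A.charpoly.eval (z ^ 2) := by
    intro c _ _ A
    rw [eval_charpoly]
    congr 1
    rw [smul_one_eq_diagonal]; rfl
  rw [hcp, hcp, h1, charpoly_mul_comm, h2, charpoly_fromBlocks_zero₁₂, Polynomial.eval_mul]
  congr 1
  · simp [charpoly, charmatrix]
  · rw [Nm]
    congr 1
    rw [charpoly_mul_comm _ (K y)]; simp only [Matrix.mul_assoc]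
end KR

namespace KR
open scoped ENNReal Matrix.Norms.L2Operator
variable {a b : Type} [Fintype a] [Fintype b] [DecidableEq a] [DecidableEq b]

/-- operator norm of the remainder -/
noncomputable def rad (M : a → b → ℝ) (x : a → ℝ) (y : b → ℝ) : ℝ := ‖Zm M x y‖

lemma rad_nonneg (M : a → b → ℝ) (x : a → ℝ) (y : b → ℝ) : 0 ≤ rad M x y := norm_nonneg _

lemma eucl_norm_sq {c : Type} [Fintype c] (w : c → ℝ) : ‖WithLp.toLp 2 w‖ ^ 2 = w ⬝ᵥ w := by
  rw [EuclideanSpace.norm_sq_eq]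
  simp [dotProduct, sq]

lemma rad_bd (M : a → b → ℝ) (x : a → ℝ) (y : b → ℝ) (w) :
    (Zm M x y *ᵥ w) ⬝ᵥ (Zm M x y *ᵥ w) ≤ rad M x y ^ 2 * (w ⬝ᵥ w) := by
  have := l2_opNorm_mulVec (Zm M x y) (WithLp.toLp 2 w)
  rw [← eucl_norm_sq, ← eucl_norm_sq, ← mul_pow]
  exact pow_le_pow_left₀ (norm_nonneg _) this 2

lemma rad_le (M : a → b → ℝ) (x : a → ℝ) (y : b → ℝ) (z : ℝ) (hz : 0 ≤ z)
    (h : ∀ w, (Zm M x y *ᵥ w) ⬝ᵥ (Zm M x y *ᵥ w) ≤ z ^ 2 * (w ⬝ᵥ w)) : rad M x y ≤ z := by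
  rw [rad, l2_opNorm_def]
  refine ContinuousLinearMap.opNorm_le_bound _ hz fun w => ?_
  apply le_of_sq_le_sq _ (by positivity)
  have := h (WithLp.ofLp w)
  rw [← eucl_norm_sq, ← eucl_norm_sq, ← mul_pow] at this
  exact this

lemma full_cont : Continuous (full : E a b → Matrix (Unit ⊕ a) (Unit ⊕ b) ℝ) := by
  refine continuous_pi fun i => continuous_pi fun j => ?_
  rcases i with i | i <;> rcases j with j | j <;> simp only [full, fromBlocks_apply₁₁, fromBlocks_apply₁₂, fromBlocks_apply₂₁, fromBlocks_apply₂₂, Matrix.of_apply] <;> fun_prop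

lemma rad_cont : Continuous (fun q : E a b => rad q.1.2 q.2.1 q.2.2) := by
  have h1 : Continuous (fun q : E a b => Zm q.1.2 q.2.1 q.2.2) :=
    full_cont.comp (chart_contDiff.continuous.comp (by fun_prop))
  exact h1.norm

lemma nrm_cont : Continuous (fun x : a → ℝ => nrm x) := by
  unfold nrm dotProduct; fun_prop

lemma kap_cont : Continuous (fun q : E a b => kap q.2.1 q.2.2) := by
  unfold kap
  exact (nrm_cont.comp (by fun_prop)).mul (nrm_cont.comp (by fun_prop))

/-- the good parameter domain -/
def Dom (a b : Type) [Fintype a] [Fintype b] [DecidableEq a] [DecidableEq b] : Set (E a b) :=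
  {q | rad q.1.2 q.2.1 q.2.2 < |kap q.2.1 q.2.2 * q.1.1|}

lemma Dom_open : IsOpen (Dom a b) := by
  apply isOpen_lt rad_cont
  exact (kap_cont.mul (by fun_prop)).abs

lemma Dom_ne {q : E a b} (h : q ∈ Dom a b) : q.1.1 ≠ 0 := by
  intro h0
  have h1 : rad q.1.2 q.2.1 q.2.2 < |kap q.2.1 q.2.2 * q.1.1| := h
  rw [h0, mul_zero, abs_zero] at h1
  exact absurd h1 (not_lt.2 (rad_nonneg _ _ _))

lemma split_of_Dom {s : ℝ} {M : a → b → ℝ} {x : a → ℝ} {y : b → ℝ} (h : ((s, M), (x, y)) ∈ Dom a b) :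
    Split (full (chart ((s, M), (x, y)))) (Zm M x y) (kap x y * s) (rad M x y) (unitv x) (unitv y) :=
  ⟨full_chart s M x y, unitv_dot x, unitv_dot y, Zv M x y, uZ M x y, rad_nonneg _ _ _, rad_bd M x y, h⟩

lemma det_pos (M : a → b → ℝ) (x : a → ℝ) (y : b → ℝ) (z : ℝ) (hz : rad M x y < z) :
    0 < (z ^ 2 • (1 : Matrix b b ℝ) - Nm (Matrix.of M) x y).det := by
  have hz0 : 0 < z := (rad_nonneg M x y).trans_lt hz
  have h := det_full 0 M x y z
  have h1 : full (chart ((0, M), (x, y))) = Zm M x y := rfl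
  rw [h1] at h
  have h2 : (z ^ 2 • (1 : Matrix (Unit ⊕ b) (Unit ⊕ b) ℝ) - (Zm M x y)ᵀ * Zm M x y).PosDef := by
    refine PosDef.of_dotProduct_mulVec_pos ?_ ?_
    · rw [IsHermitian, conjTranspose_eq_transpose_of_trivial, transpose_sub, transpose_smul, transpose_one, transpose_mul, transpose_transpose]
    · intro w hw
      have h3 := rad_bd M x y w
      have h4 : 0 < w ⬝ᵥ w := lt_of_le_of_ne (dot_self_nonneg w) (fun h => hw (dotProduct_self_eq_zero.1 h.symm))
      have h5 : rad M x y ^ 2 < z ^ 2 := pow_lt_pow_left₀ hz (rad_nonneg _ _ _) two_ne_zero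
      rw [star_trivial, sub_mulVec, smul_mulVec, one_mulVec, dotProduct_sub, dotProduct_smul, ← mulVec_mulVec, dotProduct_mulVec w, vecMul_transpose, smul_eq_mul]
      nlinarith
  have h6 := h2.det_pos
  rw [h] at h6
  have : 0 < z ^ 2 := by positivity
  rw [mul_zero] at h6
  exact (mul_pos_iff_of_pos_left (by simpa using this)).1 h6

lemma unitv_inj {x x' : a → ℝ} {c : ℝ} (h : unitv x' = c • unitv x) : x' = x := by
  have h1 := congrFun h (Sum.inl ())
  have hx := (nrm_pos x)
  have hx' := (nrm_pos x')
  simp only [unitv, ext1, Pi.smul_apply, Sum.elim_inl, smul_eq_mul, mul_one] at h1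
  ext i
  have h2 := congrFun h (Sum.inr i)
  simp only [unitv, ext1, Pi.smul_apply, Sum.elim_inr, smul_eq_mul] at h2
  have h3 : (nrm x')⁻¹ * x' i = (nrm x')⁻¹ * x i := by rw [h2, h1]; ring
  exact mul_left_cancel₀ (inv_pos.2 hx').ne' h3

lemma full_inj : Function.Injective (full : E a b → _) := by
  intro q q' h
  ext i j
  · exact congrFun (congrFun h (Sum.inl ())) (Sum.inl ())
  · exact congrFun (congrFun h (Sum.inr i)) (Sum.inr j)
  · exact congrFun (congrFun h (Sum.inr i)) (Sum.inl ())
  · exact congrFun (congrFun h (Sum.inl ())) (Sum.inr i)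

lemma chart_injOn : Set.InjOn (chart : E a b → E a b) (Dom a b) := by
  rintro ⟨⟨s, M⟩, x, y⟩ h ⟨⟨s', M'⟩, x', y'⟩ h' he
  have H := split_of_Dom h
  have H' := split_of_Dom h'
  rw [← he] at H'
  have hy : y' = y := unitv_inj (H.unique H')
  subst hy
  have h1 : full (chart ((s, M), x, y')) *ᵥ unitv y' = (kap x y' * s) • unitv x := by
    rw [H.mulVec, H.vv, H.Zv]; simp
  have h2 : full (chart ((s, M), x, y')) *ᵥ unitv y' = (kap x' y' * s') • unitv x' := by
    rw [H'.mulVec, H'.vv, H'.Zv]; simp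
  rw [h1] at h2
  have hs : s ≠ 0 := Dom_ne h
  have hs' : s' ≠ 0 := Dom_ne h'
  have hk := (kap_pos x y').ne'
  have hk' := (kap_pos x' y').ne'
  have hx : x' = x := by
    apply unitv_inj (c := (kap x' y' * s')⁻¹ * (kap x y' * s))
    rw [← smul_smul, h2, smul_smul, inv_mul_cancel₀ (mul_ne_zero hk' hs'), one_smul]
  subst hx
  have h3 : kap x' y' * s = kap x' y' * s' := by
    have := congrArg (fun w => unitv x' ⬝ᵥ w) h2
    simpa only [dotProduct_smul, unitv_dot, smul_eq_mul, mul_one] using this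
  have h4 : s = s' := mul_left_cancel₀ hk h3
  subst h4
  have h5 : Zm M x' y' = Zm M' x' y' := by
    have := congrArg full he
    rw [full_chart, full_chart] at this
    exact add_left_cancel this
  have h6 : M = M' := by
    ext i j
    have := congrFun (congrFun h5 (Sum.inr i)) (Sum.inr j)
    simpa [Zm, full, chart] using this
  rw [h6]
end KR

namespace KR
open scoped ENNReal
variable {a b : Type} [Fintype a] [Fintype b] [DecidableEq a] [DecidableEq b]

/-- `uᵀ B v` -/
noncomputable def Lam (B : Matrix (Unit ⊕ a) (Unit ⊕ b) ℝ) (x : a → ℝ) (y : b → ℝ) : ℝ :=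
  ∑ i, ∑ j, unitv x i * B i j * unitv y j

/-- the conditional density up to constants -/
noncomputable def wf (σ : ℝ) (k : ℕ) (l : ℝ) (A : Matrix b b ℝ) (z : ℝ) : ℝ :=
  Real.exp (-(z - l) ^ 2 / (2 * σ ^ 2)) * z ^ k * (z ^ 2 • (1 : Matrix b b ℝ) - A).det

lemma wf_poly (σ : ℝ) (k : ℕ) (l : ℝ) (A : Matrix b b ℝ) : wf σ k l A = fun z =>
    Real.exp (-(z - l) ^ 2 / (2 * σ ^ 2)) * (Polynomial.X ^ k * A.charpoly.comp (Polynomial.X ^ 2)).eval z := by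
  funext z
  rw [wf, Polynomial.eval_mul, Polynomial.eval_comp, Polynomial.eval_pow, Polynomial.eval_pow, Polynomial.eval_X, eval_charpoly, smul_one_eq_diagonal, mul_assoc]
  rfl

lemma wf_integrable (σ : ℝ) (hσ : 0 < σ) (k : ℕ) (l : ℝ) (A : Matrix b b ℝ) : Integrable (wf σ k l A) := by
  rw [wf_poly]; exact integrable_poly_gauss _ _ _ hσ

lemma wf_cont (σ : ℝ) (k : ℕ) (l : ℝ) (A : Matrix b b ℝ) : Continuous (wf σ k l A) := by
  rw [wf_poly]; fun_prop

/-- sign -/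
noncomputable def sg (s : ℝ) : ℝ := s / |s|

/-- the statistic in chart coordinates -/
noncomputable def Stat (σ : ℝ) (k : ℕ) (B : Matrix (Unit ⊕ a) (Unit ⊕ b) ℝ) (q : E a b) : ℝ :=
  (∫ z in Set.Ioi |kap q.2.1 q.2.2 * q.1.1|, wf σ k (sg q.1.1 * Lam B q.2.1 q.2.2) (Nm (Matrix.of q.1.2) q.2.1 q.2.2) z) /
  (∫ z in Set.Ioi (rad q.1.2 q.2.1 q.2.2), wf σ k (sg q.1.1 * Lam B q.2.1 q.2.2) (Nm (Matrix.of q.1.2) q.2.1 q.2.2) z)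

lemma stat_eq {J0 : Type} [Fintype J0] [DecidableEq J0] (σ : ℝ) (k : ℕ) (B : Matrix (Unit ⊕ a) (Unit ⊕ b) ℝ)
    (q : E a b) (hq : q ∈ Dom a b) (U : Matrix (Unit ⊕ a) J0 ℝ) (d : J0 → ℝ) (V : Matrix (Unit ⊕ b) J0 ℝ) (o : J0)
    (H : IsSVD (full (chart q)) U d V o) :
    (∫ z in Set.Ioi (d o),
        Real.exp (-(z - ∑ i, ∑ j, U i o * B i j * V j o) ^ 2 / (2 * σ ^ 2)) * z ^ k *
          ∏ j ∈ Finset.univ.erase o, (z ^ 2 - d j ^ 2)) /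
      (∫ z in {z : ℝ | 0 < z ∧ ∀ j, j ≠ o → d j < z},
        Real.exp (-(z - ∑ i, ∑ j, U i o * B i j * V j o) ^ 2 / (2 * σ ^ 2)) * z ^ k *
          ∏ j ∈ Finset.univ.erase o, (z ^ 2 - d j ^ 2)) = Stat σ k B q := by
  obtain ⟨⟨s, M⟩, x, y⟩ := q
  have hs : s ≠ 0 := Dom_ne hq
  have S := split_of_Dom hq
  obtain ⟨hd, c, hc, hV, hU⟩ := H.top S
  have hk := kap_pos x y
  have hL : ∑ i, ∑ j, U i o * B i j * V j o = sg s * Lam B x y := by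
    rw [Lam, Finset.mul_sum]
    refine Finset.sum_congr rfl fun i _ => ?_
    rw [Finset.mul_sum]
    refine Finset.sum_congr rfl fun j _ => ?_
    have h1 := congrFun hU i
    have h2 := congrFun hV j
    simp only [Pi.smul_apply, smul_eq_mul] at h1 h2
    rw [h1, h2, abs_mul, abs_of_pos hk, mul_div_mul_left _ _ hk.ne', sg]
    linear_combination (s / |s| * unitv x i * B i j * unitv y j) * hc
  have hP : ∀ z : ℝ, 0 < z → z ≠ d o → ∏ j ∈ Finset.univ.erase o, (z ^ 2 - d j ^ 2) =
      (z ^ 2 • (1 : Matrix b b ℝ) - Nm (Matrix.of M) x y).det := by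
    intro z hz hzd
    have h1 := H.det z
    rw [det_full, ← Finset.mul_prod_erase _ _ (Finset.mem_univ o)] at h1
    have h2 : d o ^ 2 = (kap x y * s) ^ 2 := by rw [hd, sq_abs]
    rw [h2] at h1
    refine (mul_left_cancel₀ ?_ h1).symm
    rw [← h2]
    intro h3
    have : (z - d o) * (z + d o) = 0 := by linarith
    rcases mul_eq_zero.1 this with h | h
    · exact hzd (sub_eq_zero.1 h)
    · have := H.nn o; linarith
  have hr := rad_nonneg M x y
  have hset : {z : ℝ | 0 < z ∧ ∀ j, j ≠ o → d j < z} =ᵐ[volume] Set.Ioi (rad M x y) := by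
    apply Filter.EventuallyLE.antisymm
    · refine Filter.EventuallyLE.trans ?_ (Ioi_ae_eq_Ici.symm.le : (Set.Ici (rad M x y) : Set ℝ) ≤ᵐ[volume] _)
      apply HasSubset.Subset.eventuallyLE
      rintro z ⟨hz, hj⟩
      exact rad_le M x y z hz.le (H.bd S z (fun j h => (hj j h).le) hz.le)
    · apply HasSubset.Subset.eventuallyLE
      intro z hz
      exact ⟨hr.trans_lt hz, fun j hj => (H.le_r S j hj).trans_lt hz⟩
  unfold Stat
  rw [setIntegral_congr_set hset, hL]
  congr 1
  · rw [hd]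
    refine setIntegral_congr_fun measurableSet_Ioi fun z hz => ?_
    have hz' : |kap x y * s| < z := hz
    simp only
    rw [hP z ((abs_nonneg _).trans_lt hz') (by rw [hd]; exact hz'.ne'), wf]
  · refine setIntegral_congr_ae measurableSet_Ioi ?_
    have : ∀ᵐ z : ℝ, z ≠ d o := by
      rw [ae_iff]; simp
    filter_upwards [this] with z hz1 hz2
    rw [hP z (hr.trans_lt hz2) hz1, wf]

lemma wf_pos (M : a → b → ℝ) (x : a → ℝ) (y : b → ℝ) (σ : ℝ) (k : ℕ) (l : ℝ) (z : ℝ) (hz : rad M x y < z) :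
    0 < wf σ k l (Nm (Matrix.of M) x y) z := by
  rw [wf]
  have := (rad_nonneg M x y).trans_lt hz
  have := det_pos M x y z hz
  positivity

lemma Lam_cont (B : Matrix (Unit ⊕ a) (Unit ⊕ b) ℝ) : Continuous fun q : E a b => Lam B q.2.1 q.2.2 := by
  have hu : ∀ {c : Type} [Fintype c] [DecidableEq c], Continuous (fun x : c → ℝ => unitv x) := by
    intro c _ _
    unfold unitv
    refine Continuous.smul (nrm_cont.inv₀ fun x => (nrm_pos x).ne') ?_
    refine continuous_pi fun i => ?_
    rcases i with i | i <;> simp only [ext1, Sum.elim_inl, Sum.elim_inr] <;> fun_prop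
  unfold Lam
  refine continuous_finsetSum _ fun i _ => continuous_finsetSum _ fun j _ => ?_
  have h1 : Continuous fun q : E a b => unitv q.2.1 i := (continuous_apply i).comp (hu.comp (by fun_prop))
  have h2 : Continuous fun q : E a b => unitv q.2.2 j := (continuous_apply j).comp (hu.comp (by fun_prop))
  exact (h1.mul continuous_const).mul h2

lemma Nm_cont : Continuous fun q : E a b => Nm (Matrix.of q.1.2) q.2.1 q.2.2 := by
  have hM : Continuous fun q : E a b => Matrix.of q.1.2 := by
    change Continuous fun q : E a b => q.1.2
    fun_prop
  have hK : ∀ {c : Type} [Fintype c] [DecidableEq c], Continuous (fun x : c → ℝ => K x) := by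
    intro c _ _
    unfold K
    exact continuous_const.add (continuous_id.matrix_vecMulVec continuous_id)
  unfold Nm
  exact (((hK.comp (by fun_prop)).matrix_mul hM.matrix_transpose).matrix_mul (hK.comp (by fun_prop))).matrix_mul hM

lemma Stat_measurable (σ : ℝ) (k : ℕ) (B : Matrix (Unit ⊕ a) (Unit ⊕ b) ℝ) : Measurable (Stat σ k B) := by
  have hsg : Measurable sg := by unfold sg; fun_prop
  have hw : Measurable fun p : E a b × ℝ => wf σ k (sg p.1.1.1 * Lam B p.1.2.1 p.1.2.2) (Nm (Matrix.of p.1.1.2) p.1.2.1 p.1.2.2) p.2 := by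
    unfold wf
    have h1 : Measurable fun p : E a b × ℝ => sg p.1.1.1 := hsg.comp (by fun_prop)
    have h2 : Measurable fun p : E a b × ℝ => Lam B p.1.2.1 p.1.2.2 := (Lam_cont B).measurable.comp measurable_fst
    have h3 : Measurable fun p : E a b × ℝ => (p.2 ^ 2 • (1 : Matrix b b ℝ) - Nm (Matrix.of p.1.1.2) p.1.2.1 p.1.2.2).det := by
      apply Continuous.measurable
      apply Continuous.matrix_det
      exact (Continuous.smul (continuous_snd.pow 2) continuous_const).sub (Nm_cont.comp continuous_fst)
    fun_prop
  have key : ∀ g : E a b → ℝ, Measurable g → Measurable fun q : E a b => ∫ z in Set.Ioi (g q), wf σ k (sg q.1.1 * Lam B q.2.1 q.2.2) (Nm (Matrix.of q.1.2) q.2.1 q.2.2) z := by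
    intro g hg
    have hset : MeasurableSet {p : E a b × ℝ | g p.1 < p.2} := measurableSet_lt (hg.comp measurable_fst) measurable_snd
    have h1 : (fun q : E a b => ∫ z in Set.Ioi (g q), wf σ k (sg q.1.1 * Lam B q.2.1 q.2.2) (Nm (Matrix.of q.1.2) q.2.1 q.2.2) z) =
      fun q => ∫ z, Set.indicator {p : E a b × ℝ | g p.1 < p.2} (fun p => wf σ k (sg p.1.1.1 * Lam B p.1.2.1 p.1.2.2) (Nm (Matrix.of p.1.1.2) p.1.2.1 p.1.2.2) p.2) (q, z) := by
      funext q
      rw [← integral_indicator measurableSet_Ioi]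
      rfl
    rw [h1]
    exact (StronglyMeasurable.integral_prod_right' (hw.indicator hset).stronglyMeasurable).measurable
  exact (key _ (kap_cont.mul (by fun_prop)).abs.measurable).div (key _ rad_cont.measurable)
end KR

namespace KR
open scoped ENNReal
variable {a b : Type} [Fintype a] [Fintype b] [DecidableEq a] [DecidableEq b]

lemma density_split (B : Matrix (Unit ⊕ a) (Unit ⊕ b) ℝ) (s : ℝ) (M : a → b → ℝ) (x : a → ℝ) (y : b → ℝ) :
    ∑ i, ∑ j, (full (chart ((s, M), (x, y))) i j - B i j) ^ 2 =
      (kap x y * s - Lam B x y) ^ 2 + (∑ i, ∑ j, (Zm M x y i j - B i j) ^ 2 - Lam B x y ^ 2) := by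
  set t := kap x y * s
  have h1 : ∑ i, ∑ j, (unitv x i) ^ 2 * (unitv y j) ^ 2 = 1 := by
    rw [← Finset.sum_mul_sum]
    have hx := unitv_dot x
    have hy := unitv_dot y
    simp only [dotProduct, ← sq] at hx hy
    rw [hx, hy, one_mul]
  have h2 : ∑ i, ∑ j, unitv x i * Zm M x y i j * unitv y j = 0 := by
    have := congrArg (fun w => unitv x ⬝ᵥ w) (Zv M x y)
    simp only [dotProduct_zero] at this
    rw [← this]
    simp only [dotProduct, mulVec, Finset.mul_sum]
    exact Finset.sum_congr rfl fun _ _ => Finset.sum_congr rfl fun _ _ => by ring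
  have h3 : ∀ i j, (full (chart ((s, M), (x, y))) i j - B i j) ^ 2 =
      t ^ 2 * ((unitv x i) ^ 2 * (unitv y j) ^ 2) + 2 * t * (unitv x i * Zm M x y i j * unitv y j)
      - 2 * t * (unitv x i * B i j * unitv y j) + (Zm M x y i j - B i j) ^ 2 := by
    intro i j
    rw [full_chart]
    simp only [Matrix.add_apply, Matrix.smul_apply, vecMulVec_apply, smul_eq_mul]
    ring
  simp only [← Finset.mul_sum] at h1
  simp only [h3, Finset.sum_add_distrib, Finset.sum_sub_distrib, ← Finset.mul_sum, h1, h2]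
  rw [← Lam]; ring

/-- full integrand -/
noncomputable def integrand (σ C : ℝ) (B : Matrix (Unit ⊕ a) (Unit ⊕ b) ℝ) (g : ℝ → ℝ≥0∞) (q : E a b) : ℝ≥0∞ :=
  ENNReal.ofReal |(fderiv ℝ chart q).det| *
    (ENNReal.ofReal (C * Real.exp (-(∑ i, ∑ j, (full (chart q) i j - B i j) ^ 2) / (2 * σ ^ 2))) *
      g (Stat σ (Fintype.card a - Fintype.card b) B q))

lemma integrand_meas (σ C : ℝ) (B : Matrix (Unit ⊕ a) (Unit ⊕ b) ℝ) (g : ℝ → ℝ≥0∞) (hg : Measurable g) :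
    Measurable (integrand σ C B g) := by
  unfold integrand
  have h1 : Continuous fun q : E a b => (fderiv ℝ chart q).det :=
    ContinuousLinearMap.continuous_det.comp (chart_contDiff.continuous_fderiv (by simp))
  have h2 : Continuous fun q : E a b => ∑ i, ∑ j, (full (chart q) i j - B i j) ^ 2 := by
    refine continuous_finsetSum _ fun i _ => continuous_finsetSum _ fun j _ => ?_
    have : Continuous fun q : E a b => full (chart q) i j :=
      (continuous_apply_apply i j).comp (full_cont.comp chart_contDiff.continuous)
    fun_prop
  refine Measurable.mul h1.abs.measurable.ennreal_ofReal (Measurable.mul ?_ (hg.comp (Stat_measurable _ _ _)))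
  exact Continuous.measurable (by fun_prop) |>.ennreal_ofReal

lemma fibre (σ C : ℝ) (hσ : 0 < σ) (B : Matrix (Unit ⊕ a) (Unit ⊕ b) ℝ)
    (hab : Fintype.card b ≤ Fintype.card a) (M : a → b → ℝ) (x : a → ℝ) (y : b → ℝ) :
    ∃ F : ℝ≥0∞, ∀ g : ℝ → ℝ≥0∞,
      ∫⁻ s, (Dom a b).indicator (integrand σ C B g) ((s, M), (x, y)) = F * ∫⁻ u in Set.Ioo (0:ℝ) 1, g u := by
  obtain ⟨c, hc⟩ := det_chart M x y hab
  set L := Lam B x y with hL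
  set A := Nm (Matrix.of M) x y with hA
  set κ := kap x y with hκ
  set r := rad M x y with hr
  set k := Fintype.card a - Fintype.card b with hk
  have hr0 : 0 ≤ r := rad_nonneg M x y
  have hκ0 : 0 < κ := kap_pos x y
  set k0 := (∑ i, ∑ j, (Zm M x y i j - B i j) ^ 2 - Lam B x y ^ 2) with hk0
  set c0 := c * C * Real.exp (-k0 / (2 * σ ^ 2)) with hc0
  have hpos : ∀ l z, r < z → 0 < wf σ k l A z := fun l z hz => wf_pos M x y σ k l z hz
  -- pointwise form
  have hpt : ∀ (g : ℝ → ℝ≥0∞) (ε s : ℝ), ε ^ 2 = 1 → r < ε * κ * s → sg s = ε →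
      integrand σ C B g ((s, M), (x, y)) = ENNReal.ofReal c0 * (ENNReal.ofReal (wf σ k (ε * L) A (ε * κ * s)) *
        g ((∫ z in Set.Ioi (ε * κ * s), wf σ k (ε * L) A z) / ∫ z in Set.Ioi r, wf σ k (ε * L) A z)) := by
    intro g ε s hε hs hsg
    have hs0 : s ≠ 0 := by rintro rfl; simp at hs; linarith
    have habs : |κ * s| = ε * κ * s := by
      have h1 : 0 < ε * κ * s := hr0.trans_lt hs
      rw [← abs_of_pos h1, mul_assoc, abs_mul ε]
      have : |ε| = 1 := by
        rw [← sq_abs] at hε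
        nlinarith [abs_nonneg ε]
      rw [this, one_mul]
    have hsq : (κ * s) ^ 2 = (ε * κ * s) ^ 2 := by rw [← habs, sq_abs]
    have hdet : 0 < ((κ * s) ^ 2 • (1 : Matrix b b ℝ) - A).det := by
      rw [hsq]; exact det_pos M x y _ hs
    have hSt : Stat σ k B ((s, M), (x, y)) = (∫ z in Set.Ioi (ε * κ * s), wf σ k (ε * L) A z) / ∫ z in Set.Ioi r, wf σ k (ε * L) A z := by
      simp only [Stat]
      rw [← hκ, habs, hsg]
    rw [integrand, hSt, ← mul_assoc, ← mul_assoc]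
    congr 1
    rw [← ENNReal.ofReal_mul (abs_nonneg _), ← ENNReal.ofReal_mul' (hpos _ _ hs).le]
    congr 1
    rw [hc s hs0 κ (kap_sq x y), abs_of_pos hdet, habs, density_split, ← hκ, ← hL, wf, hc0, ← hk0, hsq]
    have h2 : -((κ * s - L) ^ 2 + k0) / (2 * σ ^ 2) = -(ε * κ * s - ε * L) ^ 2 / (2 * σ ^ 2) + -k0 / (2 * σ ^ 2) := by
      rw [← add_div]; congr 1; linear_combination (κ * s - L) ^ 2 * hε
    rw [h2, Real.exp_add]
    ring
  refine ⟨ENNReal.ofReal c0 * (ENNReal.ofReal ((∫ z in Set.Ioi r, wf σ k L A z) / κ) +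
    ENNReal.ofReal ((∫ z in Set.Ioi r, wf σ k (-L) A z) / κ)), fun g => ?_⟩
  have hset : {s : ℝ | ((s, M), (x, y)) ∈ Dom a b} = {s | r < κ * s} ∪ {s | r < -κ * s} := by
    ext s
    change r < |κ * s| ↔ _
    rw [lt_abs]; simp
  have hm1 : MeasurableSet {s | r < κ * s} := measurableSet_lt measurable_const (by fun_prop)
  have hm2 : MeasurableSet {s | r < -κ * s} := measurableSet_lt measurable_const (by fun_prop)
  have hdis : Disjoint {s | r < κ * s} {s | r < -κ * s} := by
    rw [Set.disjoint_left]
    intro s h1 h2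
    simp only [Set.mem_setOf_eq] at h1 h2
    linarith
  have h1 : (fun s => (Dom a b).indicator (integrand σ C B g) ((s, M), (x, y))) =
      Set.indicator ({s | r < κ * s} ∪ {s | r < -κ * s}) (fun s => integrand σ C B g ((s, M), (x, y))) := by
    rw [← hset]; rfl
  rw [h1, lintegral_indicator (hm1.union hm2), lintegral_union hm2 hdis]
  have e1 := oneD (wf_cont σ k L A) (wf_integrable σ hσ k L A) (hpos L) κ hκ0.ne' g
  have e2 := oneD (wf_cont σ k (-L) A) (wf_integrable σ hσ k (-L) A) (hpos (-L)) (-κ) (neg_ne_zero.2 hκ0.ne') g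
  rw [abs_neg] at e2
  rw [abs_of_pos hκ0] at e1 e2
  have f1 : ∫⁻ s in {s | r < κ * s}, integrand σ C B g ((s, M), (x, y)) =
      ENNReal.ofReal c0 * (ENNReal.ofReal ((∫ z in Set.Ioi r, wf σ k L A z) / κ) * ∫⁻ u in Set.Ioo (0:ℝ) 1, g u) := by
    rw [← e1, ← lintegral_const_mul' _ _ ENNReal.ofReal_ne_top]
    refine setLIntegral_congr_fun hm1 fun s hs => ?_
    have hs' : r < κ * s := hs
    have hsp : 0 < s := by
      have := hr0.trans_lt hs'
      exact (mul_pos_iff_of_pos_left hκ0).1 this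
    have := hpt g 1 s (by norm_num) (by simpa using hs') (by rw [sg, abs_of_pos hsp, div_self hsp.ne'])
    simpa using this
  have f2 : ∫⁻ s in {s | r < -κ * s}, integrand σ C B g ((s, M), (x, y)) =
      ENNReal.ofReal c0 * (ENNReal.ofReal ((∫ z in Set.Ioi r, wf σ k (-L) A z) / κ) * ∫⁻ u in Set.Ioo (0:ℝ) 1, g u) := by
    rw [← e2, ← lintegral_const_mul' _ _ ENNReal.ofReal_ne_top]
    refine setLIntegral_congr_fun hm2 fun s hs => ?_
    have hs' : r < -κ * s := hs
    have hsp : s < 0 := by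
      have := hr0.trans_lt hs'
      nlinarith
    have := hpt g (-1) s (by norm_num) (by simpa using hs') (by rw [sg, abs_of_neg hsp, div_neg, div_self hsp.ne])
    simpa using this
  rw [f1, f2]
  ring

lemma total (σ C : ℝ) (hσ : 0 < σ) (B : Matrix (Unit ⊕ a) (Unit ⊕ b) ℝ)
    (hab : Fintype.card b ≤ Fintype.card a) :
    ∃ F : ℝ≥0∞, ∀ g : ℝ → ℝ≥0∞, Measurable g → ∫⁻ u in Set.Ioo (0:ℝ) 1, g u ≠ ∞ →
      ∫⁻ q in Dom a b, integrand σ C B g q = F * ∫⁻ u in Set.Ioo (0:ℝ) 1, g u := by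
  choose F hF using fun (M : a → b → ℝ) (x : a → ℝ) (y : b → ℝ) => fibre σ C hσ B hab M x y
  refine ⟨∫⁻ z : (a → ℝ) × (b → ℝ), ∫⁻ M : a → b → ℝ, F M z.1 z.2, fun g hg hfin => ?_⟩
  have hm : Measurable ((Dom a b).indicator (integrand σ C B g)) :=
    (integrand_meas σ C B g hg).indicator Dom_open.measurableSet
  rw [← lintegral_indicator Dom_open.measurableSet]
  have h1 : ∫⁻ q, (Dom a b).indicator (integrand σ C B g) q =
      ∫⁻ z : (a → ℝ) × (b → ℝ), ∫⁻ p : ℝ × (a → b → ℝ), (Dom a b).indicator (integrand σ C B g) (p, z) :=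
    lintegral_prod_symm _ hm.aemeasurable
  rw [h1, ← lintegral_mul_const' _ _ hfin]
  refine lintegral_congr fun z => ?_
  have h2 : ∫⁻ p : ℝ × (a → b → ℝ), (Dom a b).indicator (integrand σ C B g) (p, z) =
      ∫⁻ M : (a → b → ℝ), ∫⁻ s : ℝ, (Dom a b).indicator (integrand σ C B g) ((s, M), z) :=
    lintegral_prod_symm _ (hm.comp (measurable_id.prodMk measurable_const)).aemeasurable
  rw [h2, ← lintegral_mul_const' _ _ hfin]
  refine lintegral_congr fun M => ?_
  exact hF M z.1 z.2 g
end KR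

namespace KR
open scoped ENNReal
variable {a b : Type} [Fintype a] [Fintype b] [DecidableEq a] [DecidableEq b]
variable {I J : Type} [Fintype I] [Fintype J] [DecidableEq I] [DecidableEq J]

/-- place blocks into a matrix -/
noncomputable def toMat (e : Unit ⊕ a ≃ I) (f : Unit ⊕ b ≃ J) : E a b ≃L[ℝ] (I → J → ℝ) :=
  LinearEquiv.toContinuousLinearEquiv
  { toFun := fun q i j => full q (e.symm i) (f.symm j)
    map_add' := by
      intro q q'
      ext i j
      simp only [Pi.add_apply]
      generalize e.symm i = i'
      generalize f.symm j = j'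
      rcases i' with i' | i' <;> rcases j' with j' | j' <;> rfl
    map_smul' := by
      intro c q
      ext i j
      simp only [Pi.smul_apply, RingHom.id_apply]
      generalize e.symm i = i'
      generalize f.symm j = j'
      rcases i' with i' | i' <;> rcases j' with j' | j' <;> rfl
    invFun := fun Y => ((Y (e (Sum.inl ())) (f (Sum.inl ())), fun i j => Y (e (Sum.inr i)) (f (Sum.inr j))),
      (fun i => Y (e (Sum.inr i)) (f (Sum.inl ())), fun j => Y (e (Sum.inl ())) (f (Sum.inr j))))
    left_inv := by
      intro q
      simp [full]
    right_inv := by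
      intro Y
      ext i j
      obtain ⟨i', rfl⟩ := e.surjective i
      obtain ⟨j', rfl⟩ := f.surjective j
      rcases i' with i' | i' <;> rcases j' with j' | j' <;> simp [full] }

lemma toMat_apply (e : Unit ⊕ a ≃ I) (f : Unit ⊕ b ≃ J) (q : E a b) (i) (j) :
    toMat e f q i j = full q (e.symm i) (f.symm j) := rfl

instance haarMat : (volume : Measure (I → J → ℝ)).IsAddHaarMeasure :=
  Measure.pi.isAddHaarMeasure (fun _ : I => (volume : Measure (J → ℝ)))

instance haarE : (volume : Measure (E a b)).IsAddHaarMeasure := by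
  have h1 : (volume : Measure (ℝ × (a → b → ℝ))).IsAddHaarMeasure :=
    Measure.prod.instIsAddHaarMeasure (volume : Measure ℝ) (volume : Measure (a → b → ℝ))
  have h2 : (volume : Measure ((a → ℝ) × (b → ℝ))).IsAddHaarMeasure :=
    Measure.prod.instIsAddHaarMeasure (volume : Measure (a → ℝ)) (volume : Measure (b → ℝ))
  exact Measure.prod.instIsAddHaarMeasure (volume : Measure (ℝ × (a → b → ℝ))) (volume : Measure ((a → ℝ) × (b → ℝ)))

lemma vol_eq (e : Unit ⊕ a ≃ I) (f : Unit ⊕ b ≃ J) : ∃ c : NNReal,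
    (volume : Measure (I → J → ℝ)) = c • Measure.map (toMat e f) (volume : Measure (E a b)) := by
  have : (Measure.map (toMat e f) (volume : Measure (E a b))).IsAddHaarMeasure :=
    ContinuousLinearEquiv.isAddHaarMeasure_map (toMat e f) volume
  exact ⟨_, Measure.isAddLeftInvariant_eq_smul _ _⟩

lemma toMat_null (e : Unit ⊕ a ≃ I) (f : Unit ⊕ b ≃ J) (S : Set (E a b)) (hS : volume S = 0) :
    volume (toMat e f '' S) = 0 := by
  obtain ⟨c, hc⟩ := vol_eq e f
  have he : MeasurableEmbedding (toMat e f) := (toMat e f).toHomeomorph.measurableEmbedding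
  rw [hc, Measure.smul_apply, he.map_apply, Set.preimage_image_eq _ (toMat e f).injective, hS, smul_zero]

/-- the exceptional parameters -/
def Exc (a b : Type) [Fintype a] [Fintype b] [DecidableEq a] [DecidableEq b] : Set (E a b) :=
  {q | rad q.1.2 q.2.1 q.2.2 = |kap q.2.1 q.2.2 * q.1.1|} ∪ ((⋃ l, {q | q.2.1 l = 0}) ∪ ⋃ l, {q | q.2.2 l = 0})

lemma Exc_null : volume (Exc a b) = 0 := by
  refine measure_union_null ?_ (measure_union_null (measure_iUnion_null fun l => ?_) (measure_iUnion_null fun l => ?_))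
  · set D := {q : E a b | rad q.1.2 q.2.1 q.2.2 = |kap q.2.1 q.2.2 * q.1.1|} with hD
    have hDm : MeasurableSet D := by
      apply IsClosed.measurableSet
      exact isClosed_eq rad_cont (kap_cont.mul (by fun_prop)).abs
    have hm : Measurable (D.indicator (1 : E a b → ℝ≥0∞)) := measurable_one.indicator hDm
    rw [← lintegral_indicator_one hDm]
    have h1 : ∫⁻ q, D.indicator (1 : E a b → ℝ≥0∞) q =
        ∫⁻ z : (a → ℝ) × (b → ℝ), ∫⁻ p : ℝ × (a → b → ℝ), D.indicator (1 : E a b → ℝ≥0∞) (p, z) :=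
      lintegral_prod_symm _ hm.aemeasurable
    rw [h1]
    have h3 : ∀ (z : (a → ℝ) × (b → ℝ)), ∫⁻ p : ℝ × (a → b → ℝ), D.indicator (1 : E a b → ℝ≥0∞) (p, z) = 0 := by
      intro z
      have h2 : ∫⁻ p : ℝ × (a → b → ℝ), D.indicator (1 : E a b → ℝ≥0∞) (p, z) =
          ∫⁻ M : (a → b → ℝ), ∫⁻ s : ℝ, D.indicator (1 : E a b → ℝ≥0∞) ((s, M), z) :=
        lintegral_prod_symm _ (hm.comp (measurable_id.prodMk measurable_const)).aemeasurable
      rw [h2]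
      have h4 : ∀ M : (a → b → ℝ), ∫⁻ s : ℝ, D.indicator (1 : E a b → ℝ≥0∞) ((s, M), z) = 0 := by
        intro M
        have hk := kap_pos z.1 z.2
        have : (fun s : ℝ => D.indicator (1 : E a b → ℝ≥0∞) ((s, M), z)) =ᵐ[volume] 0 := by
          have hfin : ({s : ℝ | rad M z.1 z.2 = |kap z.1 z.2 * s|}).Finite := by
            apply Set.Finite.subset (s := {rad M z.1 z.2 / kap z.1 z.2, -(rad M z.1 z.2) / kap z.1 z.2}) (by simp)
            intro s hs
            have hs' : rad M z.1 z.2 = |kap z.1 z.2 * s| := hs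
            rcases abs_choice (kap z.1 z.2 * s) with h | h <;> rw [h] at hs'
            · left; rw [hs']; field_simp
            · right; rw [Set.mem_singleton_iff, hs']; field_simp
          have h0 := hfin.measure_zero volume
          rw [Filter.EventuallyEq, ae_iff]
          refine measure_mono_null ?_ h0
          intro s hs
          by_contra hn
          apply hs
          have hn' : (((s, M), z) : E a b) ∉ D := hn
          exact Set.indicator_of_notMem hn' _
        rw [lintegral_congr_ae this]; simp
      simp [h4]
    simp [h3]
  · let φ : E a b →ₗ[ℝ] ℝ := LinearMap.proj l ∘ₗ LinearMap.fst ℝ _ _ ∘ₗ LinearMap.snd ℝ _ _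
    have h := Measure.addHaar_submodule (volume : Measure (E a b)) (LinearMap.ker φ) (by
      intro htop
      have : (((0, 0), (Pi.single l 1, 0)) : E a b) ∈ LinearMap.ker φ := htop ▸ Submodule.mem_top
      simp [φ] at this)
    exact h
  · let φ : E a b →ₗ[ℝ] ℝ := LinearMap.proj l ∘ₗ LinearMap.snd ℝ _ _ ∘ₗ LinearMap.snd ℝ _ _
    have h := Measure.addHaar_submodule (volume : Measure (E a b)) (LinearMap.ker φ) (by
      intro htop
      have : (((0, 0), (0, Pi.single l 1)) : E a b) ∈ LinearMap.ker φ := htop ▸ Submodule.mem_top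
      simp [φ] at this)
    exact h

/-- exceptional matrices -/
def Bad (e : Unit ⊕ a ≃ I) (f : Unit ⊕ b ≃ J) : Set (I → J → ℝ) :=
  ⋃ i : I, ⋃ k : J, toMat (e.trans (Equiv.swap (e (Sum.inl ())) i)) (f.trans (Equiv.swap (f (Sum.inl ())) k)) ''
    (chart '' Exc a b)

lemma Bad_null (e : Unit ⊕ a ≃ I) (f : Unit ⊕ b ≃ J) : volume (Bad e f) = 0 := by
  refine measure_iUnion_null fun i => measure_iUnion_null fun k => toMat_null _ _ _ ?_
  exact addHaar_image_eq_zero_of_differentiableOn_of_addHaar_eq_zero volume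
    (chart_contDiff.differentiable (by simp)).differentiableOn Exc_null

section
variable {J0 : Type} [Fintype J0] [DecidableEq J0]

/-- every matrix with an SVD whose top vectors have nonzero pivots lies in the chart -/
lemma exists_chart (Y : Matrix (Unit ⊕ a) (Unit ⊕ b) ℝ) (U : Matrix (Unit ⊕ a) J0 ℝ) (d : J0 → ℝ) (V : Matrix (Unit ⊕ b) J0 ℝ) (o : J0)
    (H : IsSVD Y U d V o) (hu : U (Sum.inl ()) o ≠ 0) (hv : V (Sum.inl ()) o ≠ 0) :
    ∃ q : E a b, Y = full (chart q) ∧ rad q.1.2 q.2.1 q.2.2 ≤ |kap q.2.1 q.2.2 * q.1.1| ∧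
      (∀ i, q.2.1 i = U (Sum.inr i) o / U (Sum.inl ()) o) ∧ (∀ j, q.2.2 j = V (Sum.inr j) o / V (Sum.inl ()) o) := by
  set u0 := U (Sum.inl ()) o
  set v0 := V (Sum.inl ()) o
  let x : a → ℝ := fun i => U (Sum.inr i) o / u0
  let y : b → ℝ := fun j => V (Sum.inr j) o / v0
  have hux : (fun i => U i o) = u0 • ext1 x := by
    ext (i | i)
    · simp [ext1, u0]
    · simp [ext1, x]; field_simp
  have hvy : (fun i => V i o) = v0 • ext1 y := by
    ext (i | i)
    · simp [ext1, v0]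
    · simp [ext1, y]; field_simp
  have hun : u0 ^ 2 * nrm x ^ 2 = 1 := by
    have := H.Udot o o
    rw [hux, smul_dotProduct, dotProduct_smul, ext1_dot] at this
    simp at this; linarith
  have hvn : v0 ^ 2 * nrm y ^ 2 = 1 := by
    have := H.Vdot o o
    rw [hvy, smul_dotProduct, dotProduct_smul, ext1_dot] at this
    simp at this; linarith
  set s := d o * u0 * v0 with hs
  have hks : |kap x y * s| = d o := by
    rw [← abs_of_nonneg (H.nn o), ← sq_eq_sq_iff_abs_eq_abs, kap, hs]
    calc _ = d o ^ 2 * (u0 ^ 2 * nrm x ^ 2) * (v0 ^ 2 * nrm y ^ 2) := by ring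
      _ = d o ^ 2 := by rw [hun, hvn]; ring
  -- the remainder
  let Z : Matrix (Unit ⊕ a) (Unit ⊕ b) ℝ := Y - s • vecMulVec (ext1 x) (ext1 y)
  have hYv : Y *ᵥ ext1 y = (s * nrm y ^ 2) • ext1 x := by
    have h1 := H.col o
    rw [hvy, hux, mulVec_smul, smul_smul] at h1
    have h2 := congrArg (fun w => v0⁻¹ • w) h1
    simp only [smul_smul] at h2
    rw [inv_mul_cancel₀ hv, one_smul] at h2
    rw [h2]; congr 1; rw [hs]
    field_simp
    linear_combination -(d o) * hvn
  have hYu : ext1 x ᵥ* Y = (s * nrm x ^ 2) • ext1 y := by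
    have h0 : (fun i => U i o) ᵥ* Y = d o • fun i => V i o := by
      have h1 : (fun i => U i o) = U *ᵥ (Pi.single o 1) := by
        rw [mulVec_single_one]; rfl
      have h2 : (fun i => V i o) = V *ᵥ (Pi.single o 1) := by
        rw [mulVec_single_one]; rfl
      rw [h1, h2, H.eq, ← mulVec_transpose, mulVec_mulVec, transpose_mul, transpose_mul, transpose_transpose, diagonal_transpose,
        Matrix.mul_assoc, Matrix.mul_assoc, H.UU, Matrix.mul_one, ← mulVec_mulVec, ← mulVec_smul]
      congr 1
      ext k
      rw [mulVec_diagonal]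
      by_cases hk : k = o
      · subst hk; simp
      · simp [hk]
    rw [hvy, hux, smul_vecMul, smul_smul] at h0
    have h2 := congrArg (fun w => u0⁻¹ • w) h0
    simp only [smul_smul] at h2
    rw [inv_mul_cancel₀ hu, one_smul] at h2
    rw [h2]; congr 1; rw [hs]
    field_simp
    linear_combination -(d o) * hun
  have hZv : Z *ᵥ ext1 y = 0 := by
    simp only [Z]
    rw [sub_mulVec, hYv, smul_mulVec, vecMulVec_mulVec, ext1_dot, op_smul_eq_smul, smul_smul, sub_self]
  have hZu : ext1 x ᵥ* Z = 0 := by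
    simp only [Z]
    rw [vecMul_sub, hYu, vecMul_smul, vecMul_vecMulVec, ext1_dot, smul_smul, sub_self]
  let M : a → b → ℝ := fun i j => Z (Sum.inr i) (Sum.inr j)
  have hZM : Z = Zm M x y := by
    have c1 : ∀ i, Z i (Sum.inl ()) = - ∑ j, Z i (Sum.inr j) * y j := by
      intro i
      have := congrFun hZv i
      simp [mulVec, dotProduct, ext1] at this
      linarith
    have c2 : ∀ j, Z (Sum.inl ()) j = - ∑ i, x i * Z (Sum.inr i) j := by
      intro j
      have := congrFun hZu j
      simp [vecMul, dotProduct, ext1] at this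
      linarith
    ext (i | i) (j | j)
    · simp only [Zm, full, fromBlocks_apply₁₁, chart, Matrix.of_apply, dotProduct, mulVec]
      rw [show i = () from rfl, show j = () from rfl, c2]
      simp only [c1]
      simp [M]
    · simp only [Zm, full, fromBlocks_apply₁₂, chart, Matrix.of_apply, dotProduct, vecMul]
      rw [show i = () from rfl, c2]
      simp [M, vecMul, dotProduct]
    · simp only [Zm, full, fromBlocks_apply₂₁, chart, Matrix.of_apply, dotProduct, vecMul]
      rw [show j = () from rfl, c1]
      simp [M, mulVec, dotProduct]
    · simp [Zm, full, chart, M]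
  have hYf : Y = full (chart ((s, M), (x, y))) := by
    have h1 : (kap x y * s) • vecMulVec (unitv x) (unitv y) = s • vecMulVec (ext1 x) (ext1 y) := by
      have := (nrm_pos x).ne'
      have := (nrm_pos y).ne'
      rw [unitv, unitv, smul_vecMulVec, vecMulVec_smul, smul_smul, smul_smul, kap]
      congr 1
      field_simp
    rw [full_chart, ← hZM, h1]
    simp [Z]
  refine ⟨((s, M), (x, y)), hYf, ?_, fun i => rfl, fun j => rfl⟩
  change rad M x y ≤ |kap x y * s|
  rw [hks]
  refine rad_le M x y _ (H.nn o) fun w => ?_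
  -- |Z w|² ≤ |Y w|²
  have hYw : (Y *ᵥ w) ⬝ᵥ (Y *ᵥ w) ≤ d o ^ 2 * (w ⬝ᵥ w) := by
    rw [H.normSq, H.wSq, Finset.mul_sum]
    refine Finset.sum_le_sum fun j _ => ?_
    have := pow_le_pow_left₀ (H.nn j) (H.mx j) 2
    gcongr
  refine le_trans ?_ hYw
  have hYw' : Y *ᵥ w = (s * (ext1 y ⬝ᵥ w)) • ext1 x + Zm M x y *ᵥ w := by
    rw [← hZM]
    simp only [Z]
    rw [sub_mulVec, smul_mulVec, vecMulVec_mulVec, op_smul_eq_smul, smul_smul]; abel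
  have o1 : ext1 x ⬝ᵥ (Zm M x y *ᵥ w) = 0 := by
    rw [dotProduct_mulVec, ← hZM, hZu, zero_dotProduct]
  have o2 : (Zm M x y *ᵥ w) ⬝ᵥ ext1 x = 0 := by rw [dotProduct_comm, o1]
  rw [hYw']
  simp only [dotProduct_add, add_dotProduct, smul_dotProduct, dotProduct_smul, o1, o2, ext1_dot, smul_eq_mul]
  nlinarith [sq_nonneg (s * (ext1 y ⬝ᵥ w) * nrm x)]
end
end KR

namespace KR
open scoped ENNReal
variable {a b : Type} [Fintype a] [Fintype b] [DecidableEq a] [DecidableEq b]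
variable {I J : Type} [Fintype I] [Fintype J] [DecidableEq I] [DecidableEq J]
variable {J0 : Type} [Fintype J0] [DecidableEq J0]

lemma IsSVD.reindex {I' J' : Type} [Fintype I'] [Fintype J'] [DecidableEq I'] [DecidableEq J']
    {Y : Matrix I J ℝ} {U : Matrix I J0 ℝ} {d : J0 → ℝ} {V : Matrix J J0 ℝ} {o : J0}
    (H : IsSVD Y U d V o) (e : I' ≃ I) (f : J' ≃ J) :
    IsSVD (Y.submatrix e f) (U.submatrix e id) d (V.submatrix f id) o where
  eq := by
    rw [H.eq, transpose_submatrix]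
    ext i j
    simp [Matrix.mul_apply]
  UU := by
    rw [transpose_submatrix, Matrix.submatrix_mul_equiv, H.UU]; simp
  VV := by
    rw [transpose_submatrix, Matrix.submatrix_mul_equiv, H.VV]; simp
  VV' := by
    rw [transpose_submatrix, Matrix.submatrix_mul _ _ _ id _ Function.bijective_id |>.symm, H.VV']; simp
  nn := H.nn
  mx := H.mx

lemma cover0 (e : Unit ⊕ a ≃ I) (f : Unit ⊕ b ≃ J) (Y : I → J → ℝ) (U : Matrix I J0 ℝ) (d : J0 → ℝ)
    (V : Matrix J J0 ℝ) (o : J0) (H : IsSVD (Matrix.of Y) U d V o)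
    (hu : U (e (Sum.inl ())) o ≠ 0) (hv : V (f (Sum.inl ())) o ≠ 0) :
    ∃ q : E a b, toMat e f (chart q) = Y ∧ rad q.1.2 q.2.1 q.2.2 ≤ |kap q.2.1 q.2.2 * q.1.1| ∧
      (∀ i, q.2.1 i = U (e (Sum.inr i)) o / U (e (Sum.inl ())) o) ∧
      (∀ j, q.2.2 j = V (f (Sum.inr j)) o / V (f (Sum.inl ())) o) := by
  obtain ⟨q, h1, h2, h3, h4⟩ := exists_chart _ _ d _ o (H.reindex e f) hu hv
  refine ⟨q, ?_, h2, h3, h4⟩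
  ext i j
  rw [toMat_apply, ← h1]
  simp

lemma exists_ne_col {U : Matrix I J0 ℝ} {o : J0} (h : (fun i => U i o) ⬝ᵥ (fun i => U i o) = 1) : ∃ i, U i o ≠ 0 := by
  by_contra hn
  push Not at hn
  simp [dotProduct, hn] at h

lemma cover (e : Unit ⊕ a ≃ I) (f : Unit ⊕ b ≃ J) (Y : I → J → ℝ) (U : Matrix I J0 ℝ) (d : J0 → ℝ)
    (V : Matrix J J0 ℝ) (o : J0) (H : IsSVD (Matrix.of Y) U d V o) :
    Y ∈ toMat e f '' (chart '' Dom a b) ∨ Y ∈ Bad e f := by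
  obtain ⟨i, hi⟩ := exists_ne_col (U := U) (o := o) (by simpa using H.Udot o o)
  obtain ⟨k, hk⟩ := exists_ne_col (U := V) (o := o) (by simpa using H.Vdot o o)
  by_cases huv : U (e (Sum.inl ())) o ≠ 0 ∧ V (f (Sum.inl ())) o ≠ 0
  · obtain ⟨q, h1, h2, -, -⟩ := cover0 e f Y U d V o H huv.1 huv.2
    rcases lt_or_eq_of_le h2 with h | h
    · left
      exact ⟨_, ⟨q, h, rfl⟩, h1⟩
    · right
      refine Set.mem_iUnion.2 ⟨e (Sum.inl ()), Set.mem_iUnion.2 ⟨f (Sum.inl ()), ?_⟩⟩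
      rw [Equiv.swap_self, Equiv.swap_self, Equiv.trans_refl, Equiv.trans_refl]
      exact ⟨_, ⟨q, Or.inl h, rfl⟩, h1⟩
  · right
    refine Set.mem_iUnion.2 ⟨i, Set.mem_iUnion.2 ⟨k, ?_⟩⟩
    have e0 : (e.trans (Equiv.swap (e (Sum.inl ())) i)) (Sum.inl ()) = i := by simp
    have f0 : (f.trans (Equiv.swap (f (Sum.inl ())) k)) (Sum.inl ()) = k := by simp
    obtain ⟨q, h1, h2, h3, h4⟩ := cover0 (e.trans (Equiv.swap (e (Sum.inl ())) i))
      (f.trans (Equiv.swap (f (Sum.inl ())) k)) Y U d V o H (by rwa [e0]) (by rwa [f0])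
    refine ⟨_, ⟨q, Or.inr ?_, rfl⟩, h1⟩
    rw [not_and_or, not_not, not_not] at huv
    rcases huv with hu | hv
    · left
      obtain ⟨l, rfl⟩ := e.surjective i
      rcases l with l | l
      · exact absurd hu hi
      · refine Set.mem_iUnion.2 ⟨l, ?_⟩
        change q.2.1 l = 0
        rw [h3]
        simp [hu]
    · right
      obtain ⟨l, rfl⟩ := f.surjective k
      rcases l with l | l
      · exact absurd hv hk
      · refine Set.mem_iUnion.2 ⟨l, ?_⟩
        change q.2.2 l = 0
        rw [h4]
        simp [hv]

lemma chart_hasFDeriv : ∀ q ∈ Dom a b, HasFDerivWithinAt (chart : E a b → E a b) (fderiv ℝ chart q) (Dom a b) q :=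
  fun q _ => ((chart_contDiff.differentiable (by simp)) q).hasFDerivAt.hasFDerivWithinAt

lemma exists_ext (S : E a b → ℝ) (hS : Measurable S) : ∃ S' : E a b → ℝ, Measurable S' ∧ ∀ q ∈ Dom a b, S' (chart q) = S q := by
  have hm := measurableEmbedding_of_fderivWithin Dom_open.measurableSet chart_hasFDeriv (chart_injOn (a := a) (b := b))
  obtain ⟨g, hg, h⟩ := hm.exists_measurable_extend (g := fun q : Dom a b => S q) (hS.comp measurable_subtype_coe) (fun _ => ⟨0⟩)
  exact ⟨g, hg, fun q hq => congrFun h ⟨q, hq⟩⟩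

lemma sum_reindex (e : Unit ⊕ a ≃ I) (f : Unit ⊕ b ≃ J) (F : I → J → ℝ) :
    ∑ i, ∑ j, F i j = ∑ i, ∑ j, F (e i) (f j) := by
  rw [← Equiv.sum_comp e]
  exact Finset.sum_congr rfl fun i _ => (Equiv.sum_comp f _).symm

theorem main (e : Unit ⊕ a ≃ I) (f : Unit ⊕ b ≃ J) (σ C : ℝ) (hσ : 0 < σ) (hab : Fintype.card b ≤ Fintype.card a)
    (B : Matrix I J ℝ) {Ω : Type} [MeasurableSpace Ω] (P : Measure Ω) [IsProbabilityMeasure P]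
    (Y : Ω → I → J → ℝ) (hYm : Measurable Y)
    (hlaw : Measure.map Y P = volume.withDensity (fun Y => ENNReal.ofReal (C * Real.exp (-(∑ i, ∑ j, (Y i j - B i j)^2)/(2*σ^2)))))
    (U : Ω → Matrix I J0 ℝ) (d : Ω → J0 → ℝ) (V : Ω → Matrix J J0 ℝ) (o : J0)
    (H : ∀ ω, IsSVD (Matrix.of (Y ω)) (U ω) (d ω) (V ω) o) (S : Ω → ℝ)
    (hS : ∀ ω, ∀ q ∈ Dom a b, toMat e f (chart q) = Y ω →
      S ω = Stat σ (Fintype.card a - Fintype.card b) (B.submatrix e f) q) :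
    Measure.map S P = volume.restrict (Set.Ioo (0 : ℝ) 1) := by
  obtain ⟨S', hS'm, hS'⟩ := exists_ext _ (Stat_measurable σ (Fintype.card a - Fintype.card b) (B.submatrix e f))
  set φ : (I → J → ℝ) → ℝ≥0∞ := fun Y => ENNReal.ofReal (C * Real.exp (-(∑ i, ∑ j, (Y i j - B i j)^2)/(2*σ^2))) with hφ
  have hφm : Measurable φ := by rw [hφ]; fun_prop
  let T := toMat e f
  have hT : MeasurableEmbedding T := T.toHomeomorph.measurableEmbedding
  let G : (I → J → ℝ) → ℝ := fun y => S' (T.symm y)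
  have hGm : Measurable G := hS'm.comp T.symm.continuous.measurable
  let R : Set (I → J → ℝ) := T '' (chart '' Dom a b)
  have hRm : MeasurableSet R := hT.measurableSet_image'
    (measurable_image_of_fderivWithin Dom_open.measurableSet chart_hasFDeriv chart_injOn)
  have hbad : ∀ᵐ y ∂(Measure.map Y P), y ∉ Bad e f := by
    rw [hlaw]
    apply (withDensity_absolutelyContinuous _ _).ae_le
    change ∀ᵐ y ∂volume, y ∉ Bad e f
    rw [ae_iff]; simpa using Bad_null e f
  have hbad' : ∀ᵐ ω ∂P, Y ω ∉ Bad e f := ae_of_ae_map hYm.aemeasurable hbad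
  have hR' : ∀ᵐ ω ∂P, Y ω ∈ R := by
    filter_upwards [hbad'] with ω hω
    exact (cover e f _ _ _ _ _ (H ω)).resolve_right hω
  have hR : ∀ᵐ y ∂(Measure.map Y P), y ∈ R := (ae_map_iff hYm.aemeasurable hRm).2 hR'
  have hSG : S =ᵐ[P] G ∘ Y := by
    filter_upwards [hR'] with ω hω
    obtain ⟨_, ⟨q, hq, rfl⟩, h⟩ := hω
    rw [hS ω q hq h, Function.comp_apply, ← h]
    simp only [G, T.symm_apply_apply, hS' q hq]
  rw [Measure.map_congr hSG, ← Measure.map_map hGm hYm]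
  obtain ⟨c, hc⟩ := vol_eq e f
  obtain ⟨F, hF⟩ := total σ C hσ (B.submatrix e f) hab
  have key : ∀ g : ℝ → ℝ≥0∞, Measurable g → ∫⁻ u in Set.Ioo (0:ℝ) 1, g u ≠ ∞ →
      ∫⁻ u, g u ∂(Measure.map G (Measure.map Y P)) = c * F * ∫⁻ u in Set.Ioo (0:ℝ) 1, g u := by
    intro g hg hgi
    rw [lintegral_map hg hGm, ← Measure.restrict_eq_self_of_ae_mem hR, hlaw, restrict_withDensity hRm]
    change ∫⁻ y, (g ∘ G) y ∂_ = _
    rw [lintegral_withDensity_eq_lintegral_mul _ hφm (hg.comp hGm), hc, Measure.restrict_smul, lintegral_smul_measure,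
      hT.restrict_map, hT.lintegral_map, Set.preimage_image_eq _ hT.injective,
      lintegral_image_eq_lintegral_abs_det_fderiv_mul _ Dom_open.measurableSet chart_hasFDeriv chart_injOn,
      mul_assoc, ← hF g hg hgi]
    change (c : ℝ≥0∞) * _ = _
    congr 1
    refine setLIntegral_congr_fun Dom_open.measurableSet fun q hq => ?_
    simp only [integrand, Pi.mul_apply, Function.comp_apply, G, T.symm_apply_apply, hS' q hq, hφ]
    rw [sum_reindex e f]
    simp only [T, toMat_apply, Equiv.symm_apply_apply, submatrix_apply]
  have : IsProbabilityMeasure (Measure.map Y P) := Measure.isProbabilityMeasure_map hYm.aemeasurable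
  have : IsProbabilityMeasure (Measure.map G (Measure.map Y P)) := Measure.isProbabilityMeasure_map hGm.aemeasurable
  have h1 : c * F = 1 := by
    have := key 1 measurable_one (by simp)
    simpa using this.symm
  refine Measure.ext fun A hA => ?_
  have := key (A.indicator 1) (measurable_one.indicator hA) (by
    rw [lintegral_indicator_one hA]; exact measure_ne_top _ _)
  rw [h1, one_mul, lintegral_indicator_one hA, lintegral_indicator_one hA] at this
  exact this
end KR

/-- **The pivot for the largest signal is uniform (Section 2.1.2).**
Model: `Y = B + E ∈ ℝ^{N×p}` (`N > p ≥ 1`) with i.i.d. `N(0,σ²)` noise entries; `Y = U D Vᵀ`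
a measurably chosen SVD with decreasing nonnegative singular values `d`.  Let
`Λ̃₁ = U₁ᵀ B V₁` (first columns of `U`, `V`).  Then
`S_{1,Λ̃₁} = (∫_{d₁}^∞ e^{-(z-Λ̃₁)²/(2σ²)} z^{N-p} ∏_{j=2}^p (z²-d_j²) dz) /
            (∫_{d₂}^∞ e^{-(z-Λ̃₁)²/(2σ²)} z^{N-p} ∏_{j=2}^p (z²-d_j²) dz)`
is uniform on `(0,1)`.  The lower limit `d₂` of the denominator is encoded (using `d ≥ 0`)
by the condition `0 < z ∧ ∀ j ≥ 1 (zero-based), d j < z`. -/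
theorem shifted_kac_rice_statistic_uniform
    (N p : ℕ) (hNp : p < N) (hp : 1 ≤ p)
    (σ : ℝ) (hσ : 0 < σ)
    (B : Matrix (Fin N) (Fin p) ℝ)
    {Ω : Type} [MeasurableSpace Ω] (P : Measure Ω) [IsProbabilityMeasure P]
    (Y U : Ω → Fin N → Fin p → ℝ) (V : Ω → Fin p → Fin p → ℝ) (d : Ω → Fin p → ℝ)
    (hYm : Measurable Y) (hUm : Measurable U) (hVm : Measurable V) (hdm : Measurable d)
    (hlaw : Measure.map Y P =
      Measure.pi (fun i : Fin N => Measure.pi (fun j : Fin p =>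
        gaussianReal (B i j) ⟨σ ^ 2, sq_nonneg σ⟩)))
    (hSVD : ∀ ω, Matrix.of (Y ω) =
      Matrix.of (U ω) * Matrix.diagonal (d ω) * (Matrix.of (V ω))ᵀ)
    (hUorth : ∀ ω, (Matrix.of (U ω))ᵀ * Matrix.of (U ω) = 1)
    (hVorth : ∀ ω, (Matrix.of (V ω))ᵀ * Matrix.of (V ω) = 1)
    (hanti : ∀ ω, Antitone (d ω))
    (hnonneg : ∀ ω i, 0 ≤ d ω i) :
    Measure.map (fun ω =>
      (∫ z in Set.Ioi (d ω ⟨0, by omega⟩),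
        Real.exp (-(z - ∑ i : Fin N, ∑ j : Fin p,
            U ω i ⟨0, by omega⟩ * B i j * V ω j ⟨0, by omega⟩) ^ 2 / (2 * σ ^ 2)) *
          z ^ (N - p) *
          ∏ j ∈ Finset.univ.erase (⟨0, by omega⟩ : Fin p), (z ^ 2 - d ω j ^ 2)) /
      (∫ z in {z : ℝ | 0 < z ∧ ∀ j : Fin p, 1 ≤ (j : ℕ) → d ω j < z},
        Real.exp (-(z - ∑ i : Fin N, ∑ j : Fin p,
            U ω i ⟨0, by omega⟩ * B i j * V ω j ⟨0, by omega⟩) ^ 2 / (2 * σ ^ 2)) *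
          z ^ (N - p) *
          ∏ j ∈ Finset.univ.erase (⟨0, by omega⟩ : Fin p), (z ^ 2 - d ω j ^ 2))) P
      = volume.restrict (Set.Ioo (0 : ℝ) 1) := by
  obtain ⟨m, rfl⟩ : ∃ m, p = m + 1 := ⟨p - 1, by omega⟩
  obtain ⟨n, rfl⟩ : ∃ n, N = n + 1 := ⟨N - 1, by omega⟩
  obtain ⟨C, -, hC⟩ := KR.gaussian_density (n + 1) (m + 1) σ hσ ⟨σ ^ 2, sq_nonneg σ⟩ rfl B
  have e : Unit ⊕ Fin n ≃ Fin (n + 1) := Fintype.equivOfCardEq (by simp [add_comm])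
  have f : Unit ⊕ Fin m ≃ Fin (m + 1) := Fintype.equivOfCardEq (by simp [add_comm])
  have H : ∀ ω, KR.IsSVD (Matrix.of (Y ω)) (Matrix.of (U ω)) (d ω) (Matrix.of (V ω)) (⟨0, by omega⟩ : Fin (m + 1)) :=
    fun ω => ⟨hSVD ω, hUorth ω, hVorth ω, mul_eq_one_comm.1 (hVorth ω), hnonneg ω,
      fun j => hanti ω (Nat.zero_le _)⟩
  refine KR.main e f σ C hσ (by simp; omega) B P Y hYm (hlaw.trans hC) (fun ω => Matrix.of (U ω)) d
    (fun ω => Matrix.of (V ω)) ⟨0, by omega⟩ H _ ?_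
  intro ω q hq hY
  have hsvd := (H ω).reindex e f
  have hfull : (Matrix.of (Y ω)).submatrix e f = KR.full (KR.chart q) := by
    ext i j
    rw [← hY]
    simp [KR.toMat_apply]
  rw [hfull] at hsvd
  rw [← KR.stat_eq σ _ (B.submatrix e f) q hq _ _ _ _ hsvd]
  have hset : {z : ℝ | 0 < z ∧ ∀ j : Fin (m + 1), 1 ≤ (j : ℕ) → d ω j < z} =
      {z : ℝ | 0 < z ∧ ∀ j : Fin (m + 1), j ≠ ⟨0, by omega⟩ → d ω j < z} := by
    ext z
    simp only [Set.mem_setOf_eq]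
    refine and_congr_right fun _ => forall_congr' fun j => ?_
    rw [Nat.one_le_iff_ne_zero, Ne, Ne, Fin.ext_iff]
  have hsum := KR.sum_reindex e f (fun i j => U ω i ⟨0, by omega⟩ * B i j * V ω j ⟨0, by omega⟩)
  have hk : Fintype.card (Fin n) - Fintype.card (Fin m) = n + 1 - (m + 1) := by simp
  rw [hset, hsum, hk]
  rfl
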